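/- arXiv:2102.02921 — 9 statements merged into one kernel-verified Lean document; each statement's English description precedes it below -/
import Mathlib

section
/- For all x, y ∈ Q it holds that f(y) ≤ f(x) + ⟨g̃(x), y − x⟩ + (L/2)‖y − x‖₂² + δ₂, where L = 2L_f and δ₂ = δ²/(2L_f). -/
open scoped RealInnerProductSpace

section InexactGradient

variable {E : Type*} [SeminormedAddCommGroup E] [InnerProductSpace ℝ E]

theorem real_inner_le_half_mul_norm_sq_add_norm_sq_div {ε : ℝ} (hε : 0 < ε) (u v : E) :
    ⟪u, v⟫ ≤ ε / 2 * ‖v‖ ^ 2 + ‖u‖ ^ 2 / (2 * ε) :=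
  calc
    ⟪u, v⟫ ≤ ‖u‖ * ‖v‖ := real_inner_le_norm u v
    _ = 2 * ‖v‖ * ‖u‖ / 2 := by ring
    _ ≤ (ε * ‖v‖ ^ 2 + ε⁻¹ * ‖u‖ ^ 2) / 2 := by
      gcongr
      exact two_mul_le_add_mul_sq hε
    _ = ε / 2 * ‖v‖ ^ 2 + ‖u‖ ^ 2 / (2 * ε) := by ring

theorem real_inner_le_inner_add_of_norm_sub_le {ε δ : ℝ} {g g' : E} (hε : 0 < ε)
    (hg : ‖g' - g‖ ≤ δ) (v : E) :
    ⟪g, v⟫ ≤ ⟪g', v⟫ + ε / 2 * ‖v‖ ^ 2 + δ ^ 2 / (2 * ε) :=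
  calc
    ⟪g, v⟫ = ⟪g', v⟫ + ⟪g - g', v⟫ := by rw [inner_sub_left, add_sub_cancel]
    _ ≤ ⟪g', v⟫ + (ε / 2 * ‖v‖ ^ 2 + ‖g' - g‖ ^ 2 / (2 * ε)) := by
      rw [norm_sub_rev g' g]
      gcongr
      exact real_inner_le_half_mul_norm_sq_add_norm_sq_div hε (g - g') v
    _ ≤ ⟪g', v⟫ + ε / 2 * ‖v‖ ^ 2 + δ ^ 2 / (2 * ε) := by
      rw [← add_assoc]
      gcongr

end InexactGradient

theorem stmt_0_general {E : Type*} [NormedAddCommGroup E] [InnerProductSpace ℝ E] [CompleteSpace E]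
    {Q : Set E} {f : E → ℝ} {f' gt : E → E} {L δ ε : ℝ}
    (_hgrad : ∀ x ∈ Q, HasGradientAt f (f' x) x)
    (hupper : ∀ x ∈ Q, ∀ y ∈ Q, f y ≤ f x + ⟪f' x, y - x⟫ + L / 2 * ‖x - y‖ ^ 2)
    (horacle : ∀ x ∈ Q, ‖gt x - f' x‖ ≤ δ) (hε : 0 < ε) :
    ∀ x ∈ Q, ∀ y ∈ Q,
      f y ≤ f x + ⟪gt x, y - x⟫ + (L + ε) / 2 * ‖y - x‖ ^ 2 + δ ^ 2 / (2 * ε) := by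
  intro x hx y hy
  calc
    f y ≤ f x + ⟪f' x, y - x⟫ + L / 2 * ‖y - x‖ ^ 2 := norm_sub_rev x y ▸ hupper x hx y hy
    _ ≤ f x + (⟪gt x, y - x⟫ + ε / 2 * ‖y - x‖ ^ 2 + δ ^ 2 / (2 * ε))
          + L / 2 * ‖y - x‖ ^ 2 := by
      gcongr
      exact real_inner_le_inner_add_of_norm_sub_le hε (horacle x hx) (y - x)
    _ = f x + ⟪gt x, y - x⟫ + (L + ε) / 2 * ‖y - x‖ ^ 2 + δ ^ 2 / (2 * ε) := by ring

/-- Claim 4.1: inexact upper quadratic bound with `L = 2 L_f` and `δ₂ = δ² / (2 L_f)`. -/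
theorem stmt_0 {n : ℕ} (Q : Set (EuclideanSpace ℝ (Fin n)))
    (hQclosed : IsClosed Q) (hQconvex : Convex ℝ Q)
    (f : EuclideanSpace ℝ (Fin n) → ℝ)
    (f' gt : EuclideanSpace ℝ (Fin n) → EuclideanSpace ℝ (Fin n))
    (Lf δ : ℝ) (hLf : 0 < Lf) (hδ : 0 ≤ δ)
    (hgrad : ∀ x ∈ Q, HasGradientAt f (f' x) x)
    (hsmooth : ∀ x ∈ Q, ∀ y ∈ Q, ‖f' x - f' y‖ ≤ Lf * ‖x - y‖)
    (hupper : ∀ x ∈ Q, ∀ y ∈ Q,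
      f y ≤ f x + ⟪f' x, y - x⟫ + Lf / 2 * ‖x - y‖ ^ 2)
    (horacle : ∀ x ∈ Q, ‖gt x - f' x‖ ≤ δ) :
    ∀ x ∈ Q, ∀ y ∈ Q,
      f y ≤ f x + ⟪gt x, y - x⟫ + 2 * Lf / 2 * ‖y - x‖ ^ 2 + δ ^ 2 / (2 * Lf) := by
  simpa only [two_mul] using stmt_0_general hgrad hupper horacle hLf
end

section
/- For all x, y ∈ Q it holds that f(x) + ⟨g̃(x), y − x⟩ + (μ/4)‖y − x‖₂² − δ₃ ≤ f(y), where δ₃ = δ²/μ. -/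
open scoped RealInnerProductSpace

/-!
Replacing `f' x` by an approximation with error `δ` changes the linear term `⟪f' x, y - x⟫` by at
most `δ * ‖y - x‖`. By Young's inequality this costs `δ ^ 2 / μ` plus `μ / 4 * ‖y - x‖ ^ 2`, that
is, half of the quadratic term that strong convexity provides.
-/

section Young

variable {E : Type*} [SeminormedAddCommGroup E] [InnerProductSpace ℝ E]

theorem real_inner_le_sq_norm_div_add_mul_sq_norm (u v : E) {ε : ℝ} (hε : 0 < ε) :
    ⟪u, v⟫ ≤ ‖u‖ ^ 2 / (2 * ε) + ε / 2 * ‖v‖ ^ 2 := by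
  have young : 2 * ‖v‖ * ‖u‖ ≤ ε * ‖v‖ ^ 2 + ε⁻¹ * ‖u‖ ^ 2 := two_mul_le_add_mul_sq hε
  calc
    ⟪u, v⟫ ≤ ‖u‖ * ‖v‖ := real_inner_le_norm u v
    _ ≤ (ε * ‖v‖ ^ 2 + ε⁻¹ * ‖u‖ ^ 2) / 2 := by linarith
    _ = ‖u‖ ^ 2 / (2 * ε) + ε / 2 * ‖v‖ ^ 2 := by ring

theorem real_inner_le_real_inner_add_of_norm_sub_le {g p : E} {δ ε : ℝ} (hgp : ‖g - p‖ ≤ δ)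
    (hε : 0 < ε) (v : E) :
    ⟪g, v⟫ ≤ ⟪p, v⟫ + (δ ^ 2 / (2 * ε) + ε / 2 * ‖v‖ ^ 2) :=
  calc
    ⟪g, v⟫ = ⟪p, v⟫ + ⟪g - p, v⟫ := by rw [inner_sub_left, add_sub_cancel]
    _ ≤ ⟪p, v⟫ + (‖g - p‖ ^ 2 / (2 * ε) + ε / 2 * ‖v‖ ^ 2) := by
      gcongr
      exact real_inner_le_sq_norm_div_add_mul_sq_norm _ _ hε
    _ ≤ ⟪p, v⟫ + (δ ^ 2 / (2 * ε) + ε / 2 * ‖v‖ ^ 2) := by gcongr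

end Young

theorem stmt_2_general {E : Type*} [NormedAddCommGroup E] [InnerProductSpace ℝ E]
    [CompleteSpace E] {Q : Set E} {f : E → ℝ} {f' gt : E → E} {μ δ : ℝ} (hμ : 0 < μ)
    (_hgrad : ∀ x ∈ Q, HasGradientAt f (f' x) x)
    (hsc : ∀ x ∈ Q, ∀ y ∈ Q, f x + ⟪f' x, y - x⟫ + μ / 2 * ‖x - y‖ ^ 2 ≤ f y)
    (horacle : ∀ x ∈ Q, ‖gt x - f' x‖ ≤ δ) :
    ∀ x ∈ Q, ∀ y ∈ Q, f x + ⟪gt x, y - x⟫ + μ / 4 * ‖y - x‖ ^ 2 - δ ^ 2 / μ ≤ f y := by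
  intro x hx y hy
  have strong_convexity : f x + ⟪f' x, y - x⟫ + μ / 2 * ‖y - x‖ ^ 2 ≤ f y := by
    simpa only [norm_sub_rev x y] using hsc x hx y hy
  have oracle_error : ⟪gt x, y - x⟫ ≤ ⟪f' x, y - x⟫ + (δ ^ 2 / μ + μ / 4 * ‖y - x‖ ^ 2) := by
    convert real_inner_le_real_inner_add_of_norm_sub_le (horacle x hx) (half_pos hμ) (y - x)
      using 3 <;> ring
  linarith

/-- Claim 4.3: inexact strong-convexity lower bound with `δ₃ = δ² / μ`, `μ > 0`. -/
theorem stmt_2 {n : ℕ} (Q : Set (EuclideanSpace ℝ (Fin n)))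
    (hQclosed : IsClosed Q) (hQconvex : Convex ℝ Q)
    (f : EuclideanSpace ℝ (Fin n) → ℝ)
    (f' gt : EuclideanSpace ℝ (Fin n) → EuclideanSpace ℝ (Fin n))
    (μ δ : ℝ) (hμ : 0 < μ) (hδ : 0 ≤ δ)
    (hgrad : ∀ x ∈ Q, HasGradientAt f (f' x) x)
    (hsc : ∀ x ∈ Q, ∀ y ∈ Q,
      f x + ⟪f' x, y - x⟫ + μ / 2 * ‖x - y‖ ^ 2 ≤ f y)
    (horacle : ∀ x ∈ Q, ‖gt x - f' x‖ ≤ δ) :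
    ∀ x ∈ Q, ∀ y ∈ Q,
      f x + ⟪gt x, y - x⟫ + μ / 4 * ‖y - x‖ ^ 2 - δ ^ 2 / μ ≤ f y :=
  stmt_2_general hμ hgrad hsc horacle
end

section
/- For every k ≥ 1, the estimating functions of STM satisfy ψ_k(z_k) ≥ ψ_{k−1}(z_{k−1}) + ((1 + μ_τ A_{k−1})/2)‖z_k − z_{k−1}‖₂² + α_k (f(x̃_k) + ⟨g̃(x̃_k), z_k − x̃_k⟩ + (μ_τ/2)‖z_k − x̃_k‖₂²). -/
open scoped RealInnerProductSpace

/-!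
Adding the multiple `a` of a quadratic with Hessian `μ • id` raises the modulus of strong convexity
by `μ * a`, so the estimating function `ψ k` is strongly convex with modulus `1 + μ * A k`. It
therefore grows at least quadratically, with this constant, away from its minimizer, and the
inequality is this growth with the increment `ψ (k + 1) - ψ k` added on both sides.
-/

section UniformConvexity

open Filter Topology

variable {E : Type*} [NormedAddCommGroup E] [NormedSpace ℝ E] {s : Set E} {f g : E → ℝ}

lemma modulus_norm_sub_le_sub_of_isMinOn {φ : ℝ → ℝ} {z y : E} (hf : UniformConvexOn s φ f)
    (hmin : IsMinOn f s z) (hz : z ∈ s) (hy : y ∈ s) : φ ‖y - z‖ ≤ f y - f z := by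
  have segment_bound : ∀ t ∈ Set.Ioo (0 : ℝ) 1, (1 - t) * φ ‖y - z‖ ≤ f y - f z := by
    rintro t ⟨ht0, ht1⟩
    have ht : 0 ≤ 1 - t := sub_nonneg.2 ht1.le
    have hle : f z ≤ t * f y + (1 - t) * f z - t * (1 - t) * φ ‖y - z‖ :=
      (isMinOn_iff.1 hmin _ (hf.1 hy hz ht0.le ht (by ring))).trans
        (hf.2 hy hz ht0.le ht (by ring))
    refine le_of_mul_le_mul_left ?_ ht0
    linarith
  have hlim : Tendsto (fun t : ℝ ↦ (1 - t) * φ ‖y - z‖) (𝓝[>] 0) (𝓝 (φ ‖y - z‖)) := by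
    have hcont : Continuous fun t : ℝ ↦ (1 - t) * φ ‖y - z‖ := by fun_prop
    simpa using hcont.continuousWithinAt.tendsto (x := 0) (s := Set.Ioi 0)
  exact le_of_tendsto hlim (eventually_of_mem (Ioo_mem_nhdsGT one_pos) segment_bound)

lemma strongConvexOn_add {m n : ℝ} (hf : StrongConvexOn s m f) (hg : StrongConvexOn s n g) :
    StrongConvexOn s (m + n) (f + g) := by
  simpa only [StrongConvexOn, Pi.add_def, add_div, add_mul] using UniformConvexOn.add hf hg

end UniformConvexity

section QuadraticModel

variable {E : Type*} [NormedAddCommGroup E] [InnerProductSpace ℝ E] {s : Set E}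

/-- The quadratic model around the point `p` with value `c`, gradient `g` and curvature `m`; with
`c` and `g` supplied by an oracle at `p`, it is the term that each step of the method adds to its
estimating function. -/
noncomputable def quadraticModel (c : ℝ) (g p : E) (m : ℝ) (y : E) : ℝ :=
  c + ⟪g, y - p⟫ + m / 2 * ‖y - p‖ ^ 2

lemma mul_quadraticModel (a c : ℝ) (g p : E) (m : ℝ) (y : E) :
    a * quadraticModel c g p m y = quadraticModel (a * c) (a • g) p (m * a) y := by
  simp only [quadraticModel, real_inner_smul_left]
  ring

lemma quadraticModel_sub_sq_norm (c : ℝ) (g p : E) (m : ℝ) (y : E) :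
    quadraticModel c g p m y - m / 2 * ‖y‖ ^ 2 =
      ⟪g - m • p, y⟫ + (c - ⟪g, p⟫ + m / 2 * ‖p‖ ^ 2) := by
  simp only [quadraticModel, norm_sub_sq_real, inner_sub_left, inner_sub_right,
    real_inner_smul_left, real_inner_comm y p]
  ring

lemma strongConvexOn_quadraticModel (hs : Convex ℝ s) (c : ℝ) (g p : E) (m : ℝ) :
    StrongConvexOn s m (quadraticModel c g p m) := by
  simp only [strongConvexOn_iff_convex, quadraticModel_sub_sq_norm]
  exact ((innerₗ E (g - m • p)).convexOn hs).add_const _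

lemma strongConvexOn_half_sq_norm_sub (hs : Convex ℝ s) (p : E) :
    StrongConvexOn s 1 (fun y ↦ 1 / 2 * ‖y - p‖ ^ 2) := by
  have hmodel : (fun y ↦ 1 / 2 * ‖y - p‖ ^ 2) = quadraticModel 0 0 p 1 := by
    ext y
    simp [quadraticModel]
  exact hmodel ▸ strongConvexOn_quadraticModel hs 0 0 p 1

lemma strongConvexOn_add_mul_quadraticModel {f : E → ℝ} {σ : ℝ} (hf : StrongConvexOn s σ f)
    (a c : ℝ) (g p : E) (m : ℝ) :
    StrongConvexOn s (σ + m * a) (fun y ↦ f y + a * quadraticModel c g p m y) := by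
  simp only [mul_quadraticModel]
  exact strongConvexOn_add hf (strongConvexOn_quadraticModel hf.1 _ _ _ _)

end QuadraticModel

section EstimatingFunctions

variable {E : Type*} [NormedAddCommGroup E] [InnerProductSpace ℝ E] {Q : Set E}
  {c : ℕ → ℝ} {g p : ℕ → E} {μ : ℝ} {α A : ℕ → ℝ} {ψ : ℕ → E → ℝ}

lemma strongConvexOn_estimatingFunction (hQ : Convex ℝ Q) (hA0 : A 0 = α 0)
    (hA : ∀ k, A (k + 1) = A k + α (k + 1))
    (hψ0 : ∀ y, ψ 0 y = 1 / 2 * ‖y - p 0‖ ^ 2 + α 0 * quadraticModel (c 0) (g 0) (p 0) μ y)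
    (hψ : ∀ k y, ψ (k + 1) y = ψ k y +
      α (k + 1) * quadraticModel (c (k + 1)) (g (k + 1)) (p (k + 1)) μ y) (k : ℕ) :
    StrongConvexOn Q (1 + μ * A k) (ψ k) := by
  induction k with
  | zero =>
    rw [hA0, funext hψ0]
    exact strongConvexOn_add_mul_quadraticModel (strongConvexOn_half_sq_norm_sub hQ _) _ _ _ _ _
  | succ k ih =>
    rw [hA, mul_add, ← add_assoc, funext (hψ k)]
    exact strongConvexOn_add_mul_quadraticModel ih _ _ _ _ _

theorem stmt_3_general (hQ : Convex ℝ Q) (hA0 : A 0 = α 0)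
    (hA : ∀ k, A (k + 1) = A k + α (k + 1))
    (hψ0 : ∀ y, ψ 0 y = 1 / 2 * ‖y - p 0‖ ^ 2 + α 0 * quadraticModel (c 0) (g 0) (p 0) μ y)
    (hψ : ∀ k y, ψ (k + 1) y = ψ k y +
      α (k + 1) * quadraticModel (c (k + 1)) (g (k + 1)) (p (k + 1)) μ y)
    {k : ℕ} {z y : E} (hz : z ∈ Q) (hmin : IsMinOn (ψ k) Q z) (hy : y ∈ Q) :
    ψ k z + (1 + μ * A k) / 2 * ‖y - z‖ ^ 2 +
      α (k + 1) * quadraticModel (c (k + 1)) (g (k + 1)) (p (k + 1)) μ y ≤ ψ (k + 1) y := by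
  have growth : (1 + μ * A k) / 2 * ‖y - z‖ ^ 2 ≤ ψ k y - ψ k z :=
    modulus_norm_sub_le_sub_of_isMinOn
      (strongConvexOn_estimatingFunction hQ hA0 hA hψ0 hψ k) hmin hz hy
  linarith [hψ k y]

end EstimatingFunctions

/-- Lemma 4.2: key inequality for the STM estimating functions. -/
theorem stmt_3 {n : ℕ} (Q : Set (EuclideanSpace ℝ (Fin n)))
    (hQclosed : IsClosed Q) (hQconvex : Convex ℝ Q)
    (f : EuclideanSpace ℝ (Fin n) → ℝ)
    (gt : EuclideanSpace ℝ (Fin n) → EuclideanSpace ℝ (Fin n))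
    (μτ L : ℝ) (hμτ : 0 ≤ μτ) (hL : 0 < L)
    (α A : ℕ → ℝ) (xt x z : ℕ → EuclideanSpace ℝ (Fin n))
    (ψ : ℕ → EuclideanSpace ℝ (Fin n) → ℝ)
    (hxt0 : xt 0 ∈ Q) (hα0 : α 0 = 1 / L) (hA0 : A 0 = 1 / L)
    (hψ0 : ∀ y, ψ 0 y = 1 / 2 * ‖y - xt 0‖ ^ 2 +
      α 0 * (f (xt 0) + ⟪gt (xt 0), y - xt 0⟫ + μτ / 2 * ‖y - xt 0‖ ^ 2))
    (hzmem : ∀ k, z k ∈ Q) (hzmin : ∀ k, ∀ y ∈ Q, ψ k (z k) ≤ ψ k y)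
    (hx0 : x 0 = z 0)
    (hαpos : ∀ k, 0 < α (k + 1))
    (hαeq : ∀ k, (1 + μτ * A k) * (A k + α (k + 1)) = L * α (k + 1) ^ 2)
    (hA : ∀ k, A (k + 1) = A k + α (k + 1))
    (hxt : ∀ k, xt (k + 1) = (A (k + 1))⁻¹ • (A k • x k + α (k + 1) • z k))
    (hψ : ∀ k y, ψ (k + 1) y = ψ k y + α (k + 1) *
      (f (xt (k + 1)) + ⟪gt (xt (k + 1)), y - xt (k + 1)⟫ +
        μτ / 2 * ‖y - xt (k + 1)‖ ^ 2))
    (hx : ∀ k, x (k + 1) = (A (k + 1))⁻¹ • (A k • x k + α (k + 1) • z (k + 1))) :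
    ∀ k : ℕ,
      ψ k (z k) + (1 + μτ * A k) / 2 * ‖z (k + 1) - z k‖ ^ 2 +
        α (k + 1) * (f (xt (k + 1)) + ⟪gt (xt (k + 1)), z (k + 1) - xt (k + 1)⟫ +
          μτ / 2 * ‖z (k + 1) - xt (k + 1)‖ ^ 2) ≤ ψ (k + 1) (z (k + 1)) :=
  fun k ↦ stmt_3_general (c := fun k ↦ f (xt k)) (g := fun k ↦ gt (xt k)) hQconvex
    (hA0.trans hα0.symm) hA hψ0 hψ (hzmem k) (isMinOn_iff.2 (hzmin k)) (hzmem (k + 1))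
end

section
/- If μ_τ > 0, then for all k ≥ 1 the STM coefficients satisfy A_k ≥ A_{k−1} λ, where θ = μ_τ/L and λ = 1 + θ/2 + √θ. -/
/-!
With `θ = μ / L`, the recursion forces `θ * A * (A + α) ≤ α ^ 2` at every step. Completing the
square in `α` gives `θ * A ^ 2 ≤ (α - θ * A / 2) ^ 2`. Dropping `θ * A ^ 2` instead gives
`θ * A ≤ α`, so the base of the square is nonnegative, and taking roots yields
`(θ / 2 + √θ) * A ≤ α`.
-/

theorem mul_half_add_sqrt_le_of_mul_add_le_sq {θ x a : ℝ} (hθ : 0 ≤ θ) (hx : 0 ≤ x) (ha : 0 < a)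
    (h : θ * x * (x + a) ≤ a ^ 2) : x * (θ / 2 + √θ) ≤ a := by
  have hθx : 0 ≤ θ * x := mul_nonneg hθ hx
  have linear_le : θ * x ≤ a := by
    refine le_of_mul_le_mul_right ?_ ha
    calc θ * x * a ≤ θ * x * (x + a) := mul_le_mul_of_nonneg_left (le_add_of_nonneg_left hx) hθx
      _ ≤ a * a := by rwa [← sq]
  have sq_le : (√θ * x) ^ 2 ≤ (a - θ * x / 2) ^ 2 :=
    calc (√θ * x) ^ 2 = θ * x ^ 2 := by rw [mul_pow, Real.sq_sqrt hθ]
      _ ≤ a ^ 2 - θ * x * a := by linarith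
      _ ≤ a ^ 2 - θ * x * a + (θ * x / 2) ^ 2 := le_add_of_nonneg_right (sq_nonneg _)
      _ = (a - θ * x / 2) ^ 2 := by ring
  have root_le : √θ * x ≤ a - θ * x / 2 := le_of_sq_le_sq sq_le (by linarith)
  linarith

theorem stmt_4_general {L μ : ℝ} (hL : 0 < L) (hμ : 0 ≤ μ) {α A : ℕ → ℝ} (hA₀ : 0 ≤ A 0)
    (hα : ∀ k, 0 < α (k + 1))
    (hstep : ∀ k, (1 + μ * A k) * (A k + α (k + 1)) ≤ L * α (k + 1) ^ 2)
    (hA : ∀ k, A (k + 1) = A k + α (k + 1)) (k : ℕ) :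
    A k * (1 + (μ / L) / 2 + √(μ / L)) ≤ A (k + 1) := by
  have hA_mono : Monotone A :=
    monotone_nat_of_le_succ fun n => by rw [hA]; exact le_add_of_nonneg_right (hα n).le
  have hAk : 0 ≤ A k := hA₀.trans (hA_mono k.zero_le)
  have hquad : μ / L * A k * (A k + α (k + 1)) ≤ α (k + 1) ^ 2 := by
    rw [div_mul_eq_mul_div, div_mul_eq_mul_div, div_le_iff₀' hL]
    linarith [hstep k, hα k]
  have hincrement : A k * (μ / L / 2 + √(μ / L)) ≤ α (k + 1) :=
    mul_half_add_sqrt_le_of_mul_add_le_sq (by positivity) hAk (hα k) hquad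
  rw [hA]
  linarith

/-- Claim 4.4: growth of the STM coefficients `A_k` when `μ_τ > 0`. -/
theorem stmt_4 (L μτ : ℝ) (hL : 0 < L) (hμτ : 0 < μτ)
    (α A : ℕ → ℝ) (hα0 : α 0 = 1 / L) (hA0 : A 0 = 1 / L)
    (hαpos : ∀ k, 0 < α (k + 1))
    (hαeq : ∀ k, (1 + μτ * A k) * (A k + α (k + 1)) = L * α (k + 1) ^ 2)
    (hA : ∀ k, A (k + 1) = A k + α (k + 1)) :
    ∀ k : ℕ, A k * (1 + (μτ / L) / 2 + Real.sqrt (μτ / L)) ≤ A (k + 1) :=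
  stmt_4_general hL hμτ.le (hA0.symm ▸ by positivity) hαpos (fun k => (hαeq k).le) hA
end

section
/- If μ_τ > 0, then for all k ≥ 1 the STM coefficients satisfy (1/A_k) Σ_{j=0}^{k} A_j ≤ 1 + √(L/μ_τ). -/
/-!
The step equation forces `μτ * A k ^ 2 ≤ L * α (k + 1) ^ 2`, so each `A k` is at most `√(L / μτ)`
times the increment `A (k + 1) - A k`. Summing over `k`, the increments telescope.
-/

theorem sum_range_le_mul_sub_of_le_mul_sub {R : Type*} [Ring R] [PartialOrder R]
    [IsOrderedAddMonoid R] {f : ℕ → R} {c : R} (h : ∀ k, f k ≤ c * (f (k + 1) - f k)) (n : ℕ) :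
    ∑ k ∈ Finset.range n, f k ≤ c * (f n - f 0) :=
  calc ∑ k ∈ Finset.range n, f k
      ≤ ∑ k ∈ Finset.range n, c * (f (k + 1) - f k) := Finset.sum_le_sum fun k _ ↦ h k
    _ = c * (f n - f 0) := by rw [← Finset.mul_sum, Finset.sum_range_sub]

theorem sum_range_succ_le_mul_of_le_mul_sub {R : Type*} [Ring R] [PartialOrder R]
    [IsOrderedRing R] {f : ℕ → R} {c : R} (hc : 0 ≤ c) (hf0 : 0 ≤ f 0)
    (h : ∀ k, f k ≤ c * (f (k + 1) - f k)) (n : ℕ) :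
    ∑ k ∈ Finset.range (n + 1), f k ≤ (1 + c) * f n :=
  calc ∑ k ∈ Finset.range (n + 1), f k
      = ∑ k ∈ Finset.range n, f k + f n := Finset.sum_range_succ f n
    _ ≤ c * (f n - f 0) + f n := by
      gcongr
      exact sum_range_le_mul_sub_of_le_mul_sub h n
    _ ≤ c * f n + f n := by
      gcongr
      exact sub_le_self _ hf0
    _ = (1 + c) * f n := by rw [one_add_mul, add_comm]

theorem strictMono_nat_of_succ_eq_add {M : Type*} [AddZeroClass M] [Preorder M]
    [AddLeftStrictMono M] {f g : ℕ → M} (hg : ∀ k, 0 < g k)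
    (hf : ∀ k, f (k + 1) = f k + g k) : StrictMono f :=
  strictMono_nat_of_lt_succ fun k ↦ (lt_add_of_pos_right _ (hg k)).trans_eq (hf k).symm

theorem le_sqrt_div_mul_of_mul_sq_le {μ L a b : ℝ} (hμ : 0 < μ) (hb : 0 < b)
    (h : μ * a ^ 2 ≤ L * b ^ 2) : a ≤ √(L / μ) * b := by
  rw [← div_le_iff₀ hb]
  apply Real.le_sqrt_of_sq_le
  rwa [div_pow, div_le_div_iff₀ (pow_pos hb 2) hμ, mul_comm]

theorem le_sqrt_div_mul_of_step_le {μ L a b : ℝ} (hμ : 0 < μ) (ha : 0 ≤ a) (hb : 0 < b)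
    (h : (1 + μ * a) * (a + b) ≤ L * b ^ 2) : a ≤ √(L / μ) * b := by
  refine le_sqrt_div_mul_of_mul_sq_le hμ hb ?_
  calc μ * a ^ 2 = μ * a * a := by ring
    _ ≤ (1 + μ * a) * (a + b) := by gcongr <;> linarith
    _ ≤ L * b ^ 2 := h

theorem stmt_6_general (L μτ : ℝ) (hμτ : 0 < μτ) (α A : ℕ → ℝ) (hA0 : 0 ≤ A 0)
    (hαpos : ∀ k, 0 < α (k + 1))
    (hαle : ∀ k, (1 + μτ * A k) * (A k + α (k + 1)) ≤ L * α (k + 1) ^ 2)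
    (hA : ∀ k, A (k + 1) = A k + α (k + 1)) :
    ∀ k : ℕ, 1 ≤ k →
      (1 / A k) * ∑ j ∈ Finset.range (k + 1), A j ≤ 1 + √(L / μτ) := by
  intro k hk
  have hmono : StrictMono A := strictMono_nat_of_succ_eq_add hαpos hA
  have hstep (j : ℕ) : A j ≤ √(L / μτ) * (A (j + 1) - A j) := by
    rw [hA, add_sub_cancel_left]
    exact le_sqrt_div_mul_of_step_le hμτ (hA0.trans (hmono.monotone j.zero_le)) (hαpos j) (hαle j)
  have hAk : 0 < A k := hA0.trans_lt (hmono hk)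
  rw [one_div_mul_eq_div, div_le_iff₀ hAk]
  exact sum_range_succ_le_mul_of_le_mul_sub (Real.sqrt_nonneg _) hA0 hstep k

/-- Claim 4.5: `(1/A_k) ∑_{j=0}^k A_j ≤ 1 + √(L/μ_τ)` when `μ_τ > 0`. -/
theorem stmt_6 (L μτ : ℝ) (hL : 0 < L) (hμτ : 0 < μτ) (hμτL : μτ ≤ L)
    (α A : ℕ → ℝ) (hα0 : α 0 = 1 / L) (hA0 : A 0 = 1 / L)
    (hαpos : ∀ k, 0 < α (k + 1))
    (hαeq : ∀ k, (1 + μτ * A k) * (A k + α (k + 1)) = L * α (k + 1) ^ 2)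
    (hA : ∀ k, A (k + 1) = A k + α (k + 1)) :
    ∀ k : ℕ, 1 ≤ k →
      (1 / A k) * ∑ j ∈ Finset.range (k + 1), A j ≤ 1 + Real.sqrt (L / μτ) := by
  have hA0_nonneg : 0 ≤ A 0 := hA0 ▸ one_div_nonneg.2 hL.le
  exact stmt_6_general L μτ hμτ α A hA0_nonneg hαpos (fun k ↦ (hαeq k).le) hA
end

section
/- If μ_τ = 0, then for all k ≥ 1 the STM coefficients satisfy A_k ≥ (k+1)²/(4L). -/
/-!
Completing the square in `a + x = L * x ^ 2` gives `(2 * L * x - 1) ^ 2 = 4 * L * a + 1`, while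
`(2 * L * x) ^ 2 = 4 * L * (a + x)`. Hence passing from `a` to `a + x` increases `√(4 * L * a)` by
at least `1`. This square root starts at `2` when `a = 1 / L`; starting at `1` is already enough for
the claimed bound.
-/

section OrderedField

variable {K : Type*} [Field K] [LinearOrder K] [IsStrictOrderedRing K] {L : K}

lemma add_one_sq_div_le_add_of_add_eq_mul_sq {a c x : K} (hL : 0 < L) (hx : 0 < x)
    (hac : c ^ 2 / (4 * L) ≤ a) (hax : a + x = L * x ^ 2) :
    (c + 1) ^ 2 / (4 * L) ≤ a + x := by
  have ha : 0 ≤ a := le_trans (by positivity) hac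
  have one_le_mul : 1 ≤ L * x := le_of_mul_le_mul_right (by linarith) hx
  have complete_sq : (2 * L * x - 1) ^ 2 = a * (4 * L) + 1 := by
    linear_combination -4 * L * hax
  have sq_le : c ^ 2 ≤ (2 * L * x - 1) ^ 2 := by
    linarith [(div_le_iff₀ (by positivity)).mp hac]
  obtain ⟨neg_le, le⟩ := abs_le_of_sq_le_sq' sq_le (by linarith)
  rw [div_le_iff₀ (by positivity)]
  calc (c + 1) ^ 2 ≤ (2 * L * x) ^ 2 := sq_le_sq' (by linarith) (by linarith)
    _ = (a + x) * (4 * L) := by rw [hax]; ring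

theorem stmt_7_general {c : K} {α A : ℕ → K} (hL : 0 < L) (hA0 : c ^ 2 / (4 * L) ≤ A 0)
    (hαpos : ∀ k, 0 < α (k + 1))
    (hαeq : ∀ k, A k + α (k + 1) = L * α (k + 1) ^ 2)
    (hA : ∀ k, A (k + 1) = A k + α (k + 1)) (k : ℕ) :
    ((k : K) + c) ^ 2 / (4 * L) ≤ A k := by
  induction k with
  | zero => simpa using hA0
  | succ k ih =>
    rw [hA, Nat.cast_succ, add_right_comm]
    exact add_one_sq_div_le_add_of_add_eq_mul_sq hL (hαpos k) ih (hαeq k)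

end OrderedField

/-- Claim 4.6: if `μ_τ = 0` then `A_k ≥ (k+1)²/(4L)` for `k ≥ 1`. -/
theorem stmt_7 (L : ℝ) (hL : 0 < L)
    (α A : ℕ → ℝ) (hα0 : α 0 = 1 / L) (hA0 : A 0 = 1 / L)
    (hαpos : ∀ k, 0 < α (k + 1))
    (hαeq : ∀ k, A k + α (k + 1) = L * α (k + 1) ^ 2)
    (hA : ∀ k, A (k + 1) = A k + α (k + 1)) :
    ∀ k : ℕ, 1 ≤ k → ((k : ℝ) + 1) ^ 2 / (4 * L) ≤ A k := by
  have initial_le : 1 ^ 2 / (4 * L) ≤ A 0 := by rw [hA0]; gcongr <;> linarith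
  exact fun k _ => stmt_7_general hL initial_le hαpos hαeq hA k
end

section
/- For all k ≥ 0, the STM iterates with μ_τ = μ (τ = 1) satisfy A_k f(x_k) ≤ ψ_k(z_k) + δ₂ Σ_{j=0}^{k} A_j + δ₁ Σ_{j=1}^{k} α_j ‖x̃_j − z_{j−1}‖₂, where δ₁ = δ and δ₂ = δ²/(2L_f). -/
open scoped RealInnerProductSpace

/-!
A gradient oracle with absolute error `δ` is an inexact oracle for `f`: by Cauchy–Schwarz its
linear model lies below `f` up to `δ * ‖w - v‖`, and absorbing `δ * ‖w - v‖` into a second copy of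
the quadratic term by Young's inequality, the quadratic model with constant `2 * L` lies above `f`
up to `δ ^ 2 / (2 * L)`.

For such an oracle the estimate propagates along the iteration. Put `ℓ` for the linear model at
`x̃ₖ₊₁`. The upper bound for `f (xₖ₊₁)`, multiplied by `Aₖ₊₁`, splits into `Aₖ * ℓ (xₖ)`,
`αₖ₊₁ * ℓ (zₖ₊₁)` and a quadratic term which the choice of `αₖ₊₁` makes equal to
`(1 + μ * Aₖ) / 2 * ‖zₖ₊₁ - zₖ‖ ^ 2`. The first is bounded by `Aₖ * f (xₖ)`, and the last is exactly
the growth of the `(1 + μ * Aₖ)`-strongly convex function `ψₖ` away from its minimizer `zₖ`.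
-/

section NormedSpace

variable {E F : Type*} [NormedAddCommGroup E] [NormedSpace ℝ E] [NormedAddCommGroup F]
  [NormedSpace ℝ F] {s : Set E}

theorem add_modulus_norm_sub_le_of_uniformConvexOn_of_isMinOn {ω : ℝ → ℝ} {φ : E → ℝ}
    (hφ : UniformConvexOn s ω φ) {y z : E} (hz : z ∈ s) (hmin : IsMinOn φ s z) (hy : y ∈ s) :
    φ z + ω ‖y - z‖ ≤ φ y := by
  have hsegment : ∀ t ∈ Set.Ioo (0 : ℝ) 1, φ z + (1 - t) * ω ‖y - z‖ ≤ φ y := by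
    intro t ⟨ht0, ht1⟩
    have ht1' : 0 ≤ 1 - t := sub_nonneg.2 ht1.le
    have hconv := hφ.2 hy hz ht0.le ht1' (add_sub_cancel t 1)
    have hle := hmin (hφ.1 hy hz ht0.le ht1' (add_sub_cancel t 1))
    simp only [Set.mem_ofPred_eq, smul_eq_mul] at hconv hle
    refine le_of_mul_le_mul_left ?_ ht0
    linarith
  have hlim : Filter.Tendsto (fun t : ℝ => φ z + (1 - t) * ω ‖y - z‖)
      (nhdsWithin 0 (Set.Ioi 0)) (nhds (φ z + ω ‖y - z‖)) :=
    (Continuous.tendsto' (by fun_prop) 0 _ (by simp)).mono_left nhdsWithin_le_nhds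
  exact le_of_tendsto hlim (Filter.mem_of_superset (Ioo_mem_nhdsGT zero_lt_one) hsegment)

theorem strongConvexOn_add_s8 {m n : ℝ} {φ χ : E → ℝ} (hφ : StrongConvexOn s m φ)
    (hχ : StrongConvexOn s n χ) : StrongConvexOn s (m + n) (φ + χ) := by
  refine (UniformConvexOn.add hφ hχ).mono fun r => le_of_eq ?_
  simp only [Pi.add_apply]
  ring

theorem norm_sub_sub_le_of_lipschitz_hasFDerivWithinAt (hs : Convex ℝ s)
    {f : E → F} {f' : E → E →L[ℝ] F} {L : ℝ} {v w : E} (hv : v ∈ s) (hw : w ∈ s)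
    (hf : ∀ u ∈ s, HasFDerivWithinAt f (f' u) s u)
    (hf' : ∀ u ∈ s, ‖f' u - f' v‖ ≤ L * ‖u - v‖) :
    ‖f w - f v - f' v (w - v)‖ ≤ L / 2 * ‖w - v‖ ^ 2 := by
  set d := w - v with hd
  have hmaps : Set.MapsTo (fun t : ℝ => v + t • d) (Set.Icc 0 1) s := fun t ht =>
    hs.add_smul_sub_mem hv hw ht
  have hderiv : ∀ t ∈ Set.Icc (0 : ℝ) 1, HasDerivWithinAt
      (fun t : ℝ => f (v + t • d) - f v - t • f' v d) (f' (v + t • d) d - f' v d)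
      (Set.Icc 0 1) t := by
    intro t ht
    have hline : HasDerivWithinAt (fun t : ℝ => v + t • d) d (Set.Icc 0 1) t := by
      simpa using (((hasDerivAt_id t).smul_const d).const_add v).hasDerivWithinAt
    have hlinear : HasDerivWithinAt (fun t : ℝ => t • f' v d) (f' v d) (Set.Icc 0 1) t := by
      simpa using ((hasDerivAt_id t).smul_const (f' v d)).hasDerivWithinAt
    exact (((hf _ (hmaps ht)).comp_hasDerivWithinAt t hline hmaps).sub_const _).sub hlinear
  have hbound : ∀ t ∈ Set.Ico (0 : ℝ) 1, ‖f' (v + t • d) d - f' v d‖ ≤ L * ‖d‖ ^ 2 * t := by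
    intro t ht
    have hlip := hf' _ (hmaps ⟨ht.1, ht.2.le⟩)
    rw [add_sub_cancel_left, norm_smul, Real.norm_of_nonneg ht.1] at hlip
    calc ‖f' (v + t • d) d - f' v d‖ = ‖(f' (v + t • d) - f' v) d‖ := rfl
      _ ≤ L * (t * ‖d‖) * ‖d‖ := ContinuousLinearMap.le_of_opNorm_le _ hlip d
      _ = L * ‖d‖ ^ 2 * t := by ring
  have hprimitive : ∀ t : ℝ, HasDerivAt (fun t => L / 2 * ‖d‖ ^ 2 * t ^ 2) (L * ‖d‖ ^ 2 * t) t := by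
    intro t
    refine ((hasDerivAt_pow 2 t).const_mul (L / 2 * ‖d‖ ^ 2)).congr_deriv ?_
    push_cast
    ring
  have hone := image_norm_le_of_norm_deriv_right_le_deriv_boundary
    (fun t ht => (hderiv t ht).continuousWithinAt)
    (fun t ht => (hderiv t ⟨ht.1, ht.2.le⟩).mono_of_mem_nhdsWithin (Icc_mem_nhdsGE_of_mem ht))
    (by simp) hprimitive hbound (Set.right_mem_Icc.2 zero_le_one)
  simpa [hd] using hone

end NormedSpace

section InnerProductSpace

variable {E : Type*} [NormedAddCommGroup E] [InnerProductSpace ℝ E]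

theorem strongConvexOn_quadratic {s : Set E} (hs : Convex ℝ s) (c m : ℝ) (b v : E) :
    StrongConvexOn s m fun y => c + ⟪b, y - v⟫ + m / 2 * ‖y - v‖ ^ 2 := by
  rw [strongConvexOn_iff_convex]
  convert! ((innerₛₗ ℝ (b - m • v)).convexOn hs).add_const (c - ⟪b, v⟫ + m / 2 * ‖v‖ ^ 2) using 2
  simp only [innerₛₗ_apply_apply, inner_sub_left, inner_sub_right, real_inner_smul_left,
    norm_sub_sq_real, real_inner_comm v, Pi.add_apply]
  ring

/-- The linear model of `f` at `v`, as a function of `y`, whose slope `g v` stands for a possibly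
inexact gradient of `f`. -/
def linearModel (f : E → ℝ) (g : E → E) (v y : E) : ℝ :=
  f v + ⟪g v, y - v⟫

/-- An inexact first-order oracle for `f` on `Q`: its linear models lie below `f` up to an error
`δ₁` per unit of distance, and adding `L / 2 * ‖w - v‖ ^ 2` to them gives an upper bound for `f` up
to the constant error `δ₂`. Function values are exact. -/
structure IsInexactOracle (Q : Set E) (f : E → ℝ) (g : E → E) (δ₁ δ₂ L : ℝ) : Prop where
  lower : ∀ v ∈ Q, ∀ w ∈ Q, linearModel f g v w - δ₁ * ‖w - v‖ ≤ f w
  upper : ∀ v ∈ Q, ∀ w ∈ Q, f w ≤ linearModel f g v w + L / 2 * ‖w - v‖ ^ 2 + δ₂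

theorem add_mul_linearModel (f : E → ℝ) (g : E → E) {a b : ℝ} {v x y z : E}
    (h : (a + b) • z = a • x + b • y) :
    (a + b) * linearModel f g v z = a * linearModel f g v x + b * linearModel f g v y := by
  have hinner := congrArg (fun u => ⟪g v, u⟫) h
  simp only [inner_add_right, inner_smul_right] at hinner
  simp only [linearModel, inner_sub_right]
  linear_combination hinner

theorem abs_linearModel_sub_linearModel_le (f : E → ℝ) (g g' : E → E) {δ : ℝ} {v : E} (w : E)
    (h : ‖g v - g' v‖ ≤ δ) : |linearModel f g v w - linearModel f g' v w| ≤ δ * ‖w - v‖ := by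
  rw [linearModel, linearModel, add_sub_add_left_eq_sub, ← inner_sub_left]
  exact (abs_real_inner_le_norm _ _).trans (by gcongr)

theorem le_linearModel_add_of_lipschitz_gradient [CompleteSpace E] {Q : Set E}
    (hQ : Convex ℝ Q) {f : E → ℝ} {f' : E → E} {L : ℝ} {v w : E} (hv : v ∈ Q) (hw : w ∈ Q)
    (hgrad : ∀ u ∈ Q, HasGradientWithinAt f (f' u) Q u)
    (hsmooth : ∀ u ∈ Q, ‖f' u - f' v‖ ≤ L * ‖u - v‖) :
    f w ≤ linearModel f f' v w + L / 2 * ‖w - v‖ ^ 2 := by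
  have htaylor := norm_sub_sub_le_of_lipschitz_hasFDerivWithinAt hQ hv hw
    (fun u hu => (hgrad u hu).hasFDerivWithinAt)
    (fun u hu => by rw [← map_sub, LinearIsometryEquiv.norm_map]; exact hsmooth u hu)
  rw [InnerProductSpace.toDual_apply_apply] at htaylor
  rw [linearModel]
  linarith [Real.le_norm_self (f w - f v - ⟪f' v, w - v⟫)]

theorem mul_le_half_mul_sq_add_sq_div {L : ℝ} (hL : 0 < L) (δ r : ℝ) :
    δ * r ≤ L / 2 * r ^ 2 + δ ^ 2 / (2 * L) := by
  have hsq : L / 2 * r ^ 2 + δ ^ 2 / (2 * L) - δ * r = (L * r - δ) ^ 2 / (2 * L) := by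
    field_simp
    ring
  rw [← sub_nonneg, hsq]
  positivity

theorem isInexactOracle_of_norm_sub_gradient_le [CompleteSpace E] {Q : Set E}
    (hQ : Convex ℝ Q) {f : E → ℝ} {f' g : E → E} {L δ : ℝ} (hL : 0 < L)
    (hgrad : ∀ v ∈ Q, HasGradientWithinAt f (f' v) Q v)
    (hsmooth : ∀ v ∈ Q, ∀ w ∈ Q, ‖f' v - f' w‖ ≤ L * ‖v - w‖)
    (hconv : ∀ v ∈ Q, ∀ w ∈ Q, linearModel f f' v w ≤ f w)
    (hnoise : ∀ v ∈ Q, ‖g v - f' v‖ ≤ δ) :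
    IsInexactOracle Q f g δ (δ ^ 2 / (2 * L)) (2 * L) where
  lower v hv w hw := by
    have herror := (abs_le.1 (abs_linearModel_sub_linearModel_le f g f' w (hnoise v hv))).2
    linarith [hconv v hv w hw]
  upper v hv w hw := by
    have herror := (abs_le.1 (abs_linearModel_sub_linearModel_le f g f' w (hnoise v hv))).1
    have hdescent := le_linearModel_add_of_lipschitz_gradient hQ hv hw hgrad
      (fun u hu => hsmooth u hu v hv)
    linarith [mul_le_half_mul_sq_add_sq_div hL δ ‖w - v‖]

/-- A run of the similar triangles method (STM) on `Q` for `f` with oracle `g`, smoothness constant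
`L` and strong convexity parameter `μ` (the `μ_τ` of the method). The sequence `xt` holds the points
`x̃ₖ` at which the oracle is called; `z k` may be any minimizer of `ψ k` over `Q`. -/
structure IsSTMRun (Q : Set E) (f : E → ℝ) (g : E → E) (L μ : ℝ) (α A : ℕ → ℝ)
    (xt x z : ℕ → E) (ψ : ℕ → E → ℝ) : Prop where
  L_pos : 0 < L
  xt_zero_mem : xt 0 ∈ Q
  α_zero : α 0 = 1 / L
  A_zero : A 0 = 1 / L
  ψ_zero : ∀ y, ψ 0 y = 1 / 2 * ‖y - xt 0‖ ^ 2 +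
    α 0 * (linearModel f g (xt 0) y + μ / 2 * ‖y - xt 0‖ ^ 2)
  z_mem : ∀ k, z k ∈ Q
  isMinOn_z : ∀ k, IsMinOn (ψ k) Q (z k)
  x_zero : x 0 = z 0
  α_succ_pos : ∀ k, 0 < α (k + 1)
  α_succ_eq : ∀ k, (1 + μ * A k) * (A k + α (k + 1)) = L * α (k + 1) ^ 2
  A_succ : ∀ k, A (k + 1) = A k + α (k + 1)
  xt_succ : ∀ k, xt (k + 1) = (A (k + 1))⁻¹ • (A k • x k + α (k + 1) • z k)
  ψ_succ : ∀ k y, ψ (k + 1) y = ψ k y +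
    α (k + 1) * (linearModel f g (xt (k + 1)) y + μ / 2 * ‖y - xt (k + 1)‖ ^ 2)
  x_succ : ∀ k, x (k + 1) = (A (k + 1))⁻¹ • (A k • x k + α (k + 1) • z (k + 1))

namespace IsSTMRun

variable {Q : Set E} {f : E → ℝ} {g : E → E} {L μ δ₁ δ₂ : ℝ} {α A : ℕ → ℝ} {xt x z : ℕ → E}
  {ψ : ℕ → E → ℝ}

theorem A_pos (h : IsSTMRun Q f g L μ α A xt x z ψ) (k : ℕ) : 0 < A k := by
  induction k with
  | zero => rw [h.A_zero]; exact one_div_pos.2 h.L_pos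
  | succ k ih => rw [h.A_succ]; exact add_pos ih (h.α_succ_pos k)

theorem average_mem (h : IsSTMRun Q f g L μ α A xt x z ψ) (hQ : Convex ℝ Q) (k : ℕ) {v w : E}
    (hv : v ∈ Q) (hw : w ∈ Q) : (A (k + 1))⁻¹ • (A k • v + α (k + 1) • w) ∈ Q := by
  have hsum : 0 < A k + α (k + 1) := add_pos (h.A_pos k) (h.α_succ_pos k)
  rw [h.A_succ, smul_add, smul_smul, smul_smul, ← div_eq_inv_mul, ← div_eq_inv_mul]
  exact convex_iff_div.1 hQ hv hw (h.A_pos k).le (h.α_succ_pos k).le hsum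

theorem x_mem (h : IsSTMRun Q f g L μ α A xt x z ψ) (hQ : Convex ℝ Q) (k : ℕ) : x k ∈ Q := by
  induction k with
  | zero => rw [h.x_zero]; exact h.z_mem 0
  | succ k ih => rw [h.x_succ]; exact h.average_mem hQ k ih (h.z_mem _)

theorem xt_succ_mem (h : IsSTMRun Q f g L μ α A xt x z ψ) (hQ : Convex ℝ Q) (k : ℕ) :
    xt (k + 1) ∈ Q := by
  rw [h.xt_succ]
  exact h.average_mem hQ k (h.x_mem hQ k) (h.z_mem k)

theorem add_smul_xt_succ (h : IsSTMRun Q f g L μ α A xt x z ψ) (k : ℕ) :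
    (A k + α (k + 1)) • xt (k + 1) = A k • x k + α (k + 1) • z k := by
  rw [h.xt_succ, ← h.A_succ, smul_inv_smul₀ (h.A_pos _).ne']

theorem add_smul_x_succ (h : IsSTMRun Q f g L μ α A xt x z ψ) (k : ℕ) :
    (A k + α (k + 1)) • x (k + 1) = A k • x k + α (k + 1) • z (k + 1) := by
  rw [h.x_succ, ← h.A_succ, smul_inv_smul₀ (h.A_pos _).ne']

theorem A_mul_norm_x_sub_xt_succ (h : IsSTMRun Q f g L μ α A xt x z ψ) (k : ℕ) :
    A k * ‖x k - xt (k + 1)‖ = α (k + 1) * ‖xt (k + 1) - z k‖ := by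
  have hsmul : A k • (x k - xt (k + 1)) = α (k + 1) • (xt (k + 1) - z k) := by
    linear_combination (norm := module) -h.add_smul_xt_succ k
  simpa only [norm_smul, Real.norm_of_nonneg, (h.A_pos k).le, (h.α_succ_pos k).le]
    using congrArg norm hsmul

theorem A_succ_mul_sq_norm_x_sub_xt (h : IsSTMRun Q f g L μ α A xt x z ψ) (k : ℕ) :
    A (k + 1) * (L / 2 * ‖x (k + 1) - xt (k + 1)‖ ^ 2)
      = (1 + μ * A k) / 2 * ‖z (k + 1) - z k‖ ^ 2 := by
  have hsmul : A (k + 1) • (x (k + 1) - xt (k + 1)) = α (k + 1) • (z (k + 1) - z k) := by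
    rw [h.A_succ]
    linear_combination (norm := module) h.add_smul_x_succ k - h.add_smul_xt_succ k
  have hnorm := congrArg (fun u => ‖u‖ ^ 2) hsmul
  simp only [norm_smul, mul_pow, Real.norm_eq_abs, sq_abs] at hnorm
  have hα := h.α_succ_eq k
  rw [← h.A_succ] at hα
  refine mul_left_cancel₀ (h.A_pos (k + 1)).ne' ?_
  linear_combination L / 2 * hnorm - ‖z (k + 1) - z k‖ ^ 2 / 2 * hα

theorem strongConvexOn_ψ (h : IsSTMRun Q f g L μ α A xt x z ψ) (hQ : Convex ℝ Q) (k : ℕ) :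
    StrongConvexOn Q (1 + μ * A k) (ψ k) := by
  have hmodel : ∀ (a : ℝ) (v : E), StrongConvexOn Q (μ * a)
      fun y => a * (linearModel f g v y + μ / 2 * ‖y - v‖ ^ 2) := by
    intro a v
    convert! strongConvexOn_quadratic hQ (a * f v) (μ * a) (a • g v) v using 2
    rw [linearModel, real_inner_smul_left]
    ring
  induction k with
  | zero =>
    convert! strongConvexOn_add_s8 (strongConvexOn_quadratic hQ 0 1 0 (xt 0)) (hmodel (A 0) (xt 0))
      using 1
    funext y
    simp [h.ψ_zero, h.α_zero, h.A_zero]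
  | succ k ih =>
    convert! strongConvexOn_add_s8 ih (hmodel (α (k + 1)) (xt (k + 1))) using 1
    · rw [h.A_succ]; ring
    · exact funext (h.ψ_succ k)

theorem ψ_min_add_sq_norm_le (h : IsSTMRun Q f g L μ α A xt x z ψ) (hQ : Convex ℝ Q) (k : ℕ)
    {y : E} (hy : y ∈ Q) : ψ k (z k) + (1 + μ * A k) / 2 * ‖y - z k‖ ^ 2 ≤ ψ k y :=
  add_modulus_norm_sub_le_of_uniformConvexOn_of_isMinOn (h.strongConvexOn_ψ hQ k) (h.z_mem k)
    (h.isMinOn_z k) hy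

theorem A_zero_mul_le (h : IsSTMRun Q f g L μ α A xt x z ψ)
    (hg : IsInexactOracle Q f g δ₁ δ₂ L) (hμ : 0 ≤ μ) :
    A 0 * f (x 0) ≤ ψ 0 (z 0) + δ₂ * A 0 := by
  have hA0 := h.A_pos 0
  have hAL : A 0 * L = 1 := by rw [h.A_zero, one_div_mul_cancel h.L_pos.ne']
  rw [h.x_zero]
  calc A 0 * f (z 0)
      ≤ A 0 * (linearModel f g (xt 0) (z 0) + L / 2 * ‖z 0 - xt 0‖ ^ 2 + δ₂) := by
        gcongr
        exact hg.upper _ h.xt_zero_mem _ (h.z_mem 0)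
    _ = 1 / 2 * ‖z 0 - xt 0‖ ^ 2 + A 0 * (linearModel f g (xt 0) (z 0) + 0) + δ₂ * A 0 := by
        linear_combination ‖z 0 - xt 0‖ ^ 2 / 2 * hAL
    _ ≤ 1 / 2 * ‖z 0 - xt 0‖ ^ 2 +
          A 0 * (linearModel f g (xt 0) (z 0) + μ / 2 * ‖z 0 - xt 0‖ ^ 2) + δ₂ * A 0 := by
        gcongr
        positivity
    _ = ψ 0 (z 0) + δ₂ * A 0 := by rw [h.ψ_zero, h.α_zero, h.A_zero]

theorem A_mul_linearModel_le (h : IsSTMRun Q f g L μ α A xt x z ψ) (hQ : Convex ℝ Q)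
    (hg : IsInexactOracle Q f g δ₁ δ₂ L) (k : ℕ) :
    A k * linearModel f g (xt (k + 1)) (x k)
      ≤ A k * f (x k) + δ₁ * (α (k + 1) * ‖xt (k + 1) - z k‖) := by
  have hlower := mul_le_mul_of_nonneg_left
    (hg.lower _ (h.xt_succ_mem hQ k) _ (h.x_mem hQ k)) (h.A_pos k).le
  linear_combination hlower + δ₁ * h.A_mul_norm_x_sub_xt_succ k

theorem A_succ_mul_le (h : IsSTMRun Q f g L μ α A xt x z ψ) (hQ : Convex ℝ Q)
    (hg : IsInexactOracle Q f g δ₁ δ₂ L) (hμ : 0 ≤ μ) (k : ℕ) :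
    A (k + 1) * f (x (k + 1)) ≤ A k * f (x k) + (ψ (k + 1) (z (k + 1)) - ψ k (z k)) +
      δ₂ * A (k + 1) + δ₁ * (α (k + 1) * ‖xt (k + 1) - z k‖) := by
  set ℓ := linearModel f g (xt (k + 1))
  have hupper : A (k + 1) * f (x (k + 1))
      ≤ A (k + 1) * (ℓ (x (k + 1)) + L / 2 * ‖x (k + 1) - xt (k + 1)‖ ^ 2 + δ₂) :=
    mul_le_mul_of_nonneg_left (hg.upper _ (h.xt_succ_mem hQ k) _ (h.x_mem hQ (k + 1)))
      (h.A_pos (k + 1)).le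
  have haffine : A (k + 1) * ℓ (x (k + 1)) = A k * ℓ (x k) + α (k + 1) * ℓ (z (k + 1)) := by
    rw [h.A_succ]
    exact add_mul_linearModel f g (h.add_smul_x_succ k)
  have hψ : α (k + 1) * ℓ (z (k + 1)) ≤ ψ (k + 1) (z (k + 1)) - ψ k (z (k + 1)) := by
    rw [h.ψ_succ, add_sub_cancel_left]
    exact mul_le_mul_of_nonneg_left (le_add_of_nonneg_right (by positivity)) (h.α_succ_pos k).le
  have hgrowth := h.ψ_min_add_sq_norm_le hQ k (h.z_mem (k + 1))
  calc A (k + 1) * f (x (k + 1))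
      ≤ A (k + 1) * (ℓ (x (k + 1)) + L / 2 * ‖x (k + 1) - xt (k + 1)‖ ^ 2 + δ₂) := hupper
    _ = A k * ℓ (x k) + α (k + 1) * ℓ (z (k + 1)) +
          (1 + μ * A k) / 2 * ‖z (k + 1) - z k‖ ^ 2 + δ₂ * A (k + 1) := by
        linear_combination haffine + h.A_succ_mul_sq_norm_x_sub_xt k
    _ ≤ (A k * f (x k) + δ₁ * (α (k + 1) * ‖xt (k + 1) - z k‖)) +
          (ψ (k + 1) (z (k + 1)) - ψ k (z (k + 1))) + (ψ k (z (k + 1)) - ψ k (z k)) +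
          δ₂ * A (k + 1) := by
        gcongr
        · exact h.A_mul_linearModel_le hQ hg k
        · exact le_sub_iff_add_le'.2 hgrowth
    _ = _ := by ring

theorem A_mul_le_ψ_min_add_errors (h : IsSTMRun Q f g L μ α A xt x z ψ) (hQ : Convex ℝ Q)
    (hg : IsInexactOracle Q f g δ₁ δ₂ L) (hμ : 0 ≤ μ) (k : ℕ) :
    A k * f (x k) ≤ ψ k (z k) + δ₂ * ∑ j ∈ Finset.range (k + 1), A j +
      δ₁ * ∑ j ∈ Finset.range k, α (j + 1) * ‖xt (j + 1) - z j‖ := by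
  induction k with
  | zero => simpa using h.A_zero_mul_le hg hμ
  | succ k ih =>
    rw [Finset.sum_range_succ A (k + 1),
      Finset.sum_range_succ (fun j => α (j + 1) * ‖xt (j + 1) - z j‖) k]
    linarith [h.A_succ_mul_le hQ hg hμ k]

end IsSTMRun

theorem stmt_8_general [CompleteSpace E] {Q : Set E} (hQ : Convex ℝ Q) {f : E → ℝ}
    {f' gt : E → E} {Lf μ δ : ℝ} (hμ : 0 ≤ μ)
    (hgrad : ∀ v ∈ Q, HasGradientWithinAt f (f' v) Q v)
    (hsmooth : ∀ v ∈ Q, ∀ w ∈ Q, ‖f' v - f' w‖ ≤ Lf * ‖v - w‖)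
    (hconv : ∀ v ∈ Q, ∀ w ∈ Q, linearModel f f' v w ≤ f w)
    (horacle : ∀ v ∈ Q, ‖gt v - f' v‖ ≤ δ)
    {α A : ℕ → ℝ} {xt x z : ℕ → E} {ψ : ℕ → E → ℝ}
    (hrun : IsSTMRun Q f gt (2 * Lf) μ α A xt x z ψ) (k : ℕ) :
    A k * f (x k) ≤ ψ k (z k) + δ ^ 2 / (2 * Lf) * ∑ j ∈ Finset.range (k + 1), A j +
      δ * ∑ j ∈ Finset.range k, α (j + 1) * ‖xt (j + 1) - z j‖ :=
  have hLf : 0 < Lf := pos_of_mul_pos_right hrun.L_pos zero_le_two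
  hrun.A_mul_le_ψ_min_add_errors hQ
    (isInexactOracle_of_norm_sub_gradient_le hQ hLf hgrad hsmooth hconv horacle) hμ k

end InnerProductSpace

/-- Proposition 4.4: per-iterate estimate of STM (`τ = 1`, `μ_τ = μ`) under
absolute noise, with `L = 2 L_f`, `δ₁ = δ`, `δ₂ = δ²/(2 L_f)`. -/
theorem stmt_8 {n : ℕ} (Q : Set (EuclideanSpace ℝ (Fin n)))
    (hQclosed : IsClosed Q) (hQconvex : Convex ℝ Q)
    (f : EuclideanSpace ℝ (Fin n) → ℝ)
    (f' gt : EuclideanSpace ℝ (Fin n) → EuclideanSpace ℝ (Fin n))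
    (Lf μ δ : ℝ) (hLf : 0 < Lf) (hμ : 0 ≤ μ) (hδ : 0 ≤ δ)
    (hgrad : ∀ v ∈ Q, HasGradientAt f (f' v) v)
    (hsmooth : ∀ v ∈ Q, ∀ w ∈ Q, ‖f' v - f' w‖ ≤ Lf * ‖v - w‖)
    (hsc : ∀ v ∈ Q, ∀ w ∈ Q,
      f v + ⟪f' v, w - v⟫ + μ / 2 * ‖v - w‖ ^ 2 ≤ f w)
    (horacle : ∀ v ∈ Q, ‖gt v - f' v‖ ≤ δ)
    (α A : ℕ → ℝ) (xt x z : ℕ → EuclideanSpace ℝ (Fin n))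
    (ψ : ℕ → EuclideanSpace ℝ (Fin n) → ℝ)
    (hxt0 : xt 0 ∈ Q) (hα0 : α 0 = 1 / (2 * Lf)) (hA0 : A 0 = 1 / (2 * Lf))
    (hψ0 : ∀ y, ψ 0 y = 1 / 2 * ‖y - xt 0‖ ^ 2 +
      α 0 * (f (xt 0) + ⟪gt (xt 0), y - xt 0⟫ + μ / 2 * ‖y - xt 0‖ ^ 2))
    (hzmem : ∀ k, z k ∈ Q) (hzmin : ∀ k, ∀ y ∈ Q, ψ k (z k) ≤ ψ k y)
    (hx0 : x 0 = z 0)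
    (hαpos : ∀ k, 0 < α (k + 1))
    (hαeq : ∀ k, (1 + μ * A k) * (A k + α (k + 1)) = 2 * Lf * α (k + 1) ^ 2)
    (hA : ∀ k, A (k + 1) = A k + α (k + 1))
    (hxt : ∀ k, xt (k + 1) = (A (k + 1))⁻¹ • (A k • x k + α (k + 1) • z k))
    (hψ : ∀ k y, ψ (k + 1) y = ψ k y + α (k + 1) *
      (f (xt (k + 1)) + ⟪gt (xt (k + 1)), y - xt (k + 1)⟫ +
        μ / 2 * ‖y - xt (k + 1)‖ ^ 2))
    (hx : ∀ k, x (k + 1) = (A (k + 1))⁻¹ • (A k • x k + α (k + 1) • z (k + 1))) :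
    ∀ k : ℕ, A k * f (x k) ≤ ψ k (z k) +
      δ ^ 2 / (2 * Lf) * ∑ j ∈ Finset.range (k + 1), A j +
      δ * ∑ j ∈ Finset.range k, α (j + 1) * ‖xt (j + 1) - z j‖ :=
  stmt_8_general hQconvex hμ (fun v hv => (hgrad v hv).hasFDerivAt.hasFDerivWithinAt) hsmooth
    (fun v hv w hw => (le_add_of_nonneg_right (by positivity)).trans (hsc v hv w hw)) horacle
    ⟨mul_pos two_pos hLf, hxt0, hα0, hA0, hψ0, hzmem, hzmin, hx0, hαpos, hαeq, hA, hxt, hψ, hx⟩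
end

section
/- Let λ ≥ 0, θ ≥ 0, let {A_k}_{k≥0} be a sequence of positive reals, and let {Δ_k}_{k≥0} be a sequence of nonnegative reals satisfying Δ_N ≤ λ/A_N + θ Σ_{k=0}^{N−1} (A_k/A_N) Δ_k for all N ≥ 1. Then for all k ≥ 1, Δ_k ≤ (1 + θ)^{k−1} λ / A_k + θ A₀ (1 + θ)^{k−1} Δ₀ / A_k. -/
/-!
For `k ≥ 1`, the scaled term `A k * Δ k` is at most `S k = lam + θ * ∑ j < k, A j * Δ j`. Hence
adding it to the sum multiplies `S k` by at most `1 + θ`, so `S` grows at most geometrically from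
its first value `S 1 = lam + θ * (A 0 * Δ 0)`.
-/

open Finset

section Gronwall

variable {R : Type*} [CommSemiring R] [PartialOrder R] [IsOrderedRing R] {c : R} {a : ℕ → R}

theorem add_sum_range_succ_le_mul_prod_one_add {w : ℕ → R} (hw : ∀ n, 0 ≤ w (n + 1))
    (ha : ∀ n, a (n + 1) ≤ c + ∑ k ∈ range (n + 1), w k * a k) (n : ℕ) :
    c + ∑ k ∈ range (n + 1), w k * a k ≤
      (c + w 0 * a 0) * ∏ k ∈ range n, (1 + w (k + 1)) := by
  let S : ℕ → R := fun m ↦ c + ∑ k ∈ range (m + 1), w k * a k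
  have hS (m : ℕ) : S (m + 1) ≤ (1 + w (m + 1)) * S m + 0 :=
    calc S (m + 1)
      _ = S m + w (m + 1) * a (m + 1) := by simp only [S, sum_range_succ, ← add_assoc]
      _ ≤ S m + w (m + 1) * S m := by gcongr; exacts [hw m, ha m]
      _ = (1 + w (m + 1)) * S m + 0 := by ring
  simpa [S] using discrete_gronwall_prod_general (n₀ := 0) (fun m _ ↦ hS m)
    (fun m _ ↦ add_nonneg zero_le_one (hw m)) n.zero_le

theorem le_mul_one_add_pow_of_le_add_mul_sum {θ : R} (hθ : 0 ≤ θ)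
    (ha : ∀ n, a (n + 1) ≤ c + θ * ∑ k ∈ range (n + 1), a k) (n : ℕ) :
    a (n + 1) ≤ (c + θ * a 0) * (1 + θ) ^ n := by
  simp only [mul_sum] at ha
  simpa only [prod_const, card_range] using
    (ha n).trans (add_sum_range_succ_le_mul_prod_one_add (fun _ ↦ hθ) ha n)

end Gronwall

theorem div_add_mul_sum_div_mul {ι K : Type*} [Field K] (s : Finset ι) (f g : ι → K)
    (c θ x : K) :
    c / x + θ * ∑ i ∈ s, f i / x * g i = (c + θ * ∑ i ∈ s, f i * g i) / x := by
  simp only [div_mul_eq_mul_div, ← sum_div, ← mul_div_assoc, ← add_div]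

theorem stmt_15_general {K : Type*} [Field K] [LinearOrder K] [IsStrictOrderedRing K]
    {lam θ : K} (hθ : 0 ≤ θ) {A Δ : ℕ → K} (hA : ∀ k, 1 ≤ k → 0 < A k)
    (hrec : ∀ N, 1 ≤ N → Δ N ≤ lam / A N + θ * ∑ k ∈ range N, A k / A N * Δ k)
    (k : ℕ) (hk : 1 ≤ k) :
    Δ k ≤ (1 + θ) ^ (k - 1) / A k * lam + θ * (A 0 * (1 + θ) ^ (k - 1)) / A k * Δ 0 := by
  have scaled (n : ℕ) :
      A (n + 1) * Δ (n + 1) ≤ lam + θ * ∑ j ∈ range (n + 1), A j * Δ j := by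
    rw [← le_div_iff₀' (hA _ n.succ_pos), ← div_add_mul_sum_div_mul]
    exact hrec _ n.succ_pos
  obtain ⟨n, rfl⟩ := Nat.exists_eq_add_of_le' hk
  calc Δ (n + 1)
    _ ≤ (lam + θ * (A 0 * Δ 0)) * (1 + θ) ^ n / A (n + 1) :=
      (le_div_iff₀' (hA _ hk)).2
        (le_mul_one_add_pow_of_le_add_mul_sum (a := fun j ↦ A j * Δ j) hθ scaled n)
    _ = _ := by rw [Nat.add_sub_cancel]; ring

/-- Claim 5.1: solution of the error-accumulation recurrence. -/
theorem stmt_15 (lam θ : ℝ) (hlam : 0 ≤ lam) (hθ : 0 ≤ θ)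
    (A Δ : ℕ → ℝ) (hA : ∀ k, 0 < A k) (hΔ : ∀ k, 0 ≤ Δ k)
    (hrec : ∀ N : ℕ, 1 ≤ N →
      Δ N ≤ lam / A N + θ * ∑ k ∈ Finset.range N, A k / A N * Δ k) :
    ∀ k : ℕ, 1 ≤ k →
      Δ k ≤ (1 + θ) ^ (k - 1) / A k * lam +
        θ * (A 0 * (1 + θ) ^ (k - 1)) / A k * Δ 0 :=
  stmt_15_general hθ (fun k _ ↦ hA k) hrec
end

section
/- Assume f is L_f-smooth and μ-strongly convex with μ > 0, Q = ℝⁿ, the inexact gradient satisfies ‖g̃(x) − ∇f(x)‖₂ ≤ α‖∇f(x)‖₂ for all x with α ≤ (1/7)(μ₂/L) where L = 2L_f and μ₂ = μ/2, and ‖x_start − x*‖₂ ≤ R. Then for all k ≥ 1 the sequence {y_k} generated by STM2 satisfies f(y_k) − f(x*) ≤ (5 L R² / 4 + (15/196) √(2L/μ) (f(y₀) − f(x*))) · exp(−(k/4)√(μ/(2L))). -/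
open scoped RealInnerProductSpace

/-!
Let `z` be the minimizer and `q = √(m / L)`. Along the method the potential
`Φ k = A k * (f (x k) - f z) + (1 + m * A k) / 2 * ‖u k - z‖ ^ 2` does not increase. The reason is
that `2m`-strong convexity yields twice the quadratic term needed by an exact step, so at every step
`m / 2 * (‖y - z‖ ^ 2 + ‖u - y‖ ^ 2)` is left over; since the gradient error at `y` is at most
`a * L * ‖y - z‖`, this surplus absorbs the noise as soon as `a * L ≤ (√2 - 1) * m`.

Convexity and `L`-smoothness at the point `y (k + 1)`, a convex combination of `x k` and `u k`, give
`α (k + 1) * (f (y (k + 1)) - f z) ≤ Φ k ≤ Φ 0 ≤ 5 / 4 * ‖u 0 - z‖ ^ 2`. Finally `A k` grows at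
least like `(1 + q) ^ k ≥ exp (k * q / 2)`, and `(L * α k) ^ 2 ≥ L * A k`, which is why the rate of
`f (y k) - f z` carries the exponent `k * q / 4`.
-/

section Smooth

variable {E : Type*} [NormedAddCommGroup E] [InnerProductSpace ℝ E] [CompleteSpace E]
  {f : E → ℝ} {f' : E → E} {L : ℝ}

theorem hasDerivAt_add_smul_of_hasGradientAt {g v d : E} {t : ℝ}
    (h : HasGradientAt f g (v + t • d)) : HasDerivAt (fun s : ℝ => f (v + s • d)) ⟪g, d⟫ t := by
  have hline : HasDerivAt (fun s : ℝ => v + s • d) d t := by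
    simpa using ((hasDerivAt_id t).smul_const d).const_add v
  exact (h.hasFDerivAt.comp_hasDerivAt t hline).congr_deriv
    (InnerProductSpace.toDual_apply_apply ..)

theorem le_quadratic_of_lipschitz_gradient (hgrad : ∀ v, HasGradientAt f (f' v) v)
    (hsmooth : ∀ v w, ‖f' v - f' w‖ ≤ L * ‖v - w‖) (v w : E) :
    f w ≤ f v + ⟪f' v, w - v⟫ + L / 2 * ‖w - v‖ ^ 2 := by
  set d := w - v with hd
  have hφ (t : ℝ) : HasDerivAt (fun s : ℝ => f (v + s • d)) ⟪f' (v + t • d), d⟫ t :=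
    hasDerivAt_add_smul_of_hasGradientAt (hgrad _)
  have hB (t : ℝ) : HasDerivAt (fun s : ℝ => f v + s * ⟪f' v, d⟫ + L / 2 * ‖d‖ ^ 2 * s ^ 2)
      (⟪f' v, d⟫ + L * t * ‖d‖ ^ 2) t := by
    refine ((((hasDerivAt_id t).mul_const _).const_add (f v)).add
      ((hasDerivAt_pow 2 t).const_mul (L / 2 * ‖d‖ ^ 2))).congr_deriv ?_
    push_cast
    ring
  have hslope : ∀ t ∈ Set.Ico (0 : ℝ) 1,
      ⟪f' (v + t • d), d⟫ ≤ ⟪f' v, d⟫ + L * t * ‖d‖ ^ 2 := fun t ht => by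
    have hlip : ‖f' (v + t • d) - f' v‖ ≤ L * (t * ‖d‖) := by
      simpa [norm_smul, abs_of_nonneg ht.1] using hsmooth (v + t • d) v
    calc ⟪f' (v + t • d), d⟫ = ⟪f' v, d⟫ + ⟪f' (v + t • d) - f' v, d⟫ := by
          rw [inner_sub_left]; ring
      _ ≤ ⟪f' v, d⟫ + L * (t * ‖d‖) * ‖d‖ := by
          gcongr
          exact (real_inner_le_norm _ _).trans (by gcongr)
      _ = ⟪f' v, d⟫ + L * t * ‖d‖ ^ 2 := by ring
  have hle := image_le_of_deriv_right_le_deriv_boundary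
    (fun t _ => (hφ t).continuousAt.continuousWithinAt) (fun t _ => (hφ t).hasDerivWithinAt)
    (by simp) (fun t _ => (hB t).continuousAt.continuousWithinAt)
    (fun t _ => (hB t).hasDerivWithinAt) hslope (Set.right_mem_Icc.2 zero_le_one)
  calc f w = f (v + (1 : ℝ) • d) := by rw [hd, one_smul, add_sub_cancel]
    _ ≤ f v + 1 * ⟪f' v, d⟫ + L / 2 * ‖d‖ ^ 2 * 1 ^ 2 := hle
    _ = f v + ⟪f' v, d⟫ + L / 2 * ‖d‖ ^ 2 := by ring

theorem gradient_eq_zero_of_forall_le {g z : E} (h : HasGradientAt f g z)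
    (hz : ∀ v, f z ≤ f v) : g = 0 := by
  simpa using IsLocalMin.hasFDerivAt_eq_zero (Filter.Eventually.of_forall hz) h.hasFDerivAt

theorem sub_le_norm_sq_of_lipschitz_gradient (hgrad : ∀ v, HasGradientAt f (f' v) v)
    (hsmooth : ∀ v w, ‖f' v - f' w‖ ≤ L * ‖v - w‖) {z : E} (hz : f' z = 0) (v : E) :
    f v - f z ≤ L / 2 * ‖v - z‖ ^ 2 := by
  have h := le_quadratic_of_lipschitz_gradient hgrad hsmooth z v
  rw [hz, inner_zero_left] at h
  linarith

end Smooth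

section InnerProduct

variable {E : Type*} [NormedAddCommGroup E] [InnerProductSpace ℝ E]

theorem real_inner_sub_sub_eq_norm_sq (p q r : E) :
    ⟪p - q, p - r⟫ = (‖p - q‖ ^ 2 + ‖p - r‖ ^ 2 - ‖q - r‖ ^ 2) / 2 := by
  rw [real_inner_eq_norm_mul_self_add_norm_mul_self_sub_norm_sub_mul_self_div_two,
    sub_sub_sub_cancel_left, norm_sub_rev r q]
  ring

theorem add_inner_le_of_strongConvex {f : E → ℝ} {f' : E → E} {m : ℝ} (hm : 0 ≤ m)
    (hsc : ∀ v w, f v + ⟪f' v, w - v⟫ + m * ‖v - w‖ ^ 2 ≤ f w) (v w : E) :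
    f v + ⟪f' v, w - v⟫ ≤ f w :=
  (le_add_of_nonneg_right (mul_nonneg hm (sq_nonneg _))).trans (hsc v w)

theorem two_mul_le_of_strongConvex_of_lipschitz {f : E → ℝ} {f' : E → E} {m L : ℝ}
    (hsc : ∀ v w, f v + ⟪f' v, w - v⟫ + m * ‖v - w‖ ^ 2 ≤ f w)
    (hsmooth : ∀ v w, ‖f' v - f' w‖ ≤ L * ‖v - w‖) {v w : E} (hvw : v ≠ w) : 2 * m ≤ L := by
  have hpos : 0 < ‖v - w‖ ^ 2 := pow_pos (norm_sub_pos_iff.2 hvw) 2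
  have hmono : 2 * m * ‖v - w‖ ^ 2 ≤ ⟪f' v - f' w, v - w⟫ := by
    have hv := hsc v w
    have hw := hsc w v
    rw [← neg_sub v w, inner_neg_right] at hv
    rw [norm_sub_rev] at hw
    rw [inner_sub_left]
    linarith
  refine le_of_mul_le_mul_right (hmono.trans ?_) hpos
  calc ⟪f' v - f' w, v - w⟫ ≤ ‖f' v - f' w‖ * ‖v - w‖ := real_inner_le_norm _ _
    _ ≤ L * ‖v - w‖ * ‖v - w‖ := by gcongr; exact hsmooth v w
    _ = L * ‖v - w‖ ^ 2 := by ring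

/-- The threshold `2 / 5` is a rational lower approximation of `√2 - 1`: the quadratic form
`(m / 2 - δ) s² - δ s w + (m / 2) w²` is nonnegative for `δ ≤ (√2 - 1) m`. -/
theorem neg_inner_le_of_norm_le {m : ℝ} {e y u z : E} (hm : 0 ≤ m)
    (he : ‖e‖ ≤ 2 / 5 * m * ‖y - z‖) :
    -⟪e, u - z⟫ ≤ m / 2 * (‖y - z‖ ^ 2 + ‖u - y‖ ^ 2) := by
  have htri : ‖u - z‖ ≤ ‖u - y‖ + ‖y - z‖ := norm_sub_le_norm_sub_add_norm_sub u y z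
  calc -⟪e, u - z⟫ ≤ ‖e‖ * ‖u - z‖ := (neg_le_abs _).trans (abs_real_inner_le_norm _ _)
    _ ≤ 2 / 5 * m * ‖y - z‖ * (‖u - y‖ + ‖y - z‖) := by gcongr
    _ ≤ m / 2 * (‖y - z‖ ^ 2 + ‖u - y‖ ^ 2) := by
        nlinarith [mul_nonneg hm (sq_nonneg (2 * ‖u - y‖ - ‖y - z‖)),
          mul_nonneg hm (sq_nonneg ‖u - y‖), mul_nonneg hm (sq_nonneg ‖y - z‖)]

end InnerProduct

theorem norm_sub_le_of_relative_error {E : Type*} [NormedAddCommGroup E] {f' g : E → E}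
    {L m a : ℝ} (hL : 0 < L) (hm : 0 ≤ m) (hsmooth : ∀ v w, ‖f' v - f' w‖ ≤ L * ‖v - w‖)
    (ha : a ≤ 2 / 5 * (m / L)) (hrel : ∀ v, ‖g v - f' v‖ ≤ a * ‖f' v‖)
    {z : E} (hz : f' z = 0) (v : E) : ‖g v - f' v‖ ≤ 2 / 5 * m * ‖v - z‖ := by
  have hgrad : ‖f' v‖ ≤ L * ‖v - z‖ := by simpa [hz] using hsmooth v z
  calc ‖g v - f' v‖ ≤ a * ‖f' v‖ := hrel v
    _ ≤ 2 / 5 * (m / L) * (L * ‖v - z‖) := by gcongr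
    _ = 2 / 5 * m * ‖v - z‖ := by field_simp

theorem exp_half_le_one_add {q : ℝ} (hq0 : 0 ≤ q) (hq1 : q ≤ 1) :
    Real.exp (q / 2) ≤ 1 + q := by
  refine (Real.exp_bound_div_one_sub_of_interval (by linarith) (by linarith)).trans ?_
  rw [div_le_iff₀ (by linarith)]
  nlinarith

/-- The step sizes `α` of the similar triangles method with parameters `L` (smoothness) and `m`
(strong convexity), together with their partial sums `A`. The paper's `α 0` is the initial value
`A 0 = 1 / L`, so only the values `α (k + 1)` are constrained. -/
structure IsSimilarTrianglesStepSize (L m : ℝ) (α A : ℕ → ℝ) : Prop where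
  L_pos : 0 < L
  m_nonneg : 0 ≤ m
  A_zero : A 0 = 1 / L
  A_succ : ∀ k, A (k + 1) = A k + α (k + 1)
  step_pos : ∀ k, 0 < α (k + 1)
  step_eq : ∀ k, (1 + m * A k) * A (k + 1) = L * α (k + 1) ^ 2

namespace IsSimilarTrianglesStepSize

variable {L m : ℝ} {α A : ℕ → ℝ}

theorem A_pos (h : IsSimilarTrianglesStepSize L m α A) (k : ℕ) : 0 < A k := by
  induction k with
  | zero => rw [h.A_zero]; exact one_div_pos.2 h.L_pos
  | succ k ih => rw [h.A_succ]; exact add_pos ih (h.step_pos k)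

theorem sqrt_mul_A_le_step (h : IsSimilarTrianglesStepSize L m α A) (k : ℕ) :
    √(m / L) * A k ≤ α (k + 1) := by
  have hA := h.A_pos k
  have hm := h.m_nonneg
  have hmono : A k ≤ A (k + 1) := by rw [h.A_succ]; linarith [h.step_pos k]
  refine le_of_sq_le_sq (le_of_mul_le_mul_left ?_ h.L_pos) (h.step_pos k).le
  calc L * (√(m / L) * A k) ^ 2 = m * A k * A k := by
        rw [mul_pow, Real.sq_sqrt (div_nonneg hm h.L_pos.le)]
        field_simp [h.L_pos.ne']
    _ ≤ (1 + m * A k) * A (k + 1) := by gcongr; linarith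
    _ = L * α (k + 1) ^ 2 := h.step_eq k

theorem one_add_sqrt_pow_le (h : IsSimilarTrianglesStepSize L m α A) (k : ℕ) :
    (1 + √(m / L)) ^ k ≤ L * A k := by
  have hL := h.L_pos
  induction k with
  | zero => rw [h.A_zero, pow_zero, mul_one_div_cancel hL.ne']
  | succ k ih =>
    calc (1 + √(m / L)) ^ (k + 1) ≤ L * A k * (1 + √(m / L)) := by rw [pow_succ]; gcongr
      _ = L * (A k + √(m / L) * A k) := by ring
      _ ≤ L * A (k + 1) := by
        rw [h.A_succ]
        gcongr
        exact h.sqrt_mul_A_le_step k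

theorem exp_le_step (h : IsSimilarTrianglesStepSize L m α A) (hmL : m ≤ L) (k : ℕ) :
    Real.exp ((k + 1 : ℕ) / 4 * √(m / L)) ≤ L * α (k + 1) := by
  have hL := h.L_pos
  have hA := h.A_pos (k + 1)
  have hq : √(m / L) ≤ 1 := Real.sqrt_le_one.2 ((div_le_one hL).2 hmL)
  refine le_of_sq_le_sq ?_ (mul_pos hL (h.step_pos k)).le
  calc Real.exp ((k + 1 : ℕ) / 4 * √(m / L)) ^ 2 = Real.exp (√(m / L) / 2) ^ (k + 1) := by
        rw [← Real.exp_nat_mul, ← Real.exp_nat_mul]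
        congr 1
        push_cast
        ring
    _ ≤ (1 + √(m / L)) ^ (k + 1) := by
        gcongr
        exact exp_half_le_one_add (Real.sqrt_nonneg _) hq
    _ ≤ L * A (k + 1) := h.one_add_sqrt_pow_le (k + 1)
    _ ≤ L * ((1 + m * A k) * A (k + 1)) := by
        gcongr
        exact le_mul_of_one_le_left hA.le
          (le_add_of_nonneg_right (mul_nonneg h.m_nonneg (h.A_pos k).le))
    _ = (L * α (k + 1)) ^ 2 := by rw [h.step_eq]; ring

end IsSimilarTrianglesStepSize

/-- The sequences generated by the similar triangles method STM2 on the whole space, started at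
`x 0 = u 0` and driven by the gradient oracle `g`. The parameter `m` is the paper's `μ₂`, half the
modulus of strong convexity. -/
structure IsSimilarTriangles {E : Type*} [NormedAddCommGroup E] [InnerProductSpace ℝ E]
    (L m : ℝ) (g : E → E) (α A : ℕ → ℝ) (y u x : ℕ → E) : Prop
    extends IsSimilarTrianglesStepSize L m α A where
  x_zero : x 0 = u 0
  y_succ : ∀ k, y (k + 1) = (A (k + 1))⁻¹ • (A k • x k + α (k + 1) • u k)
  u_succ : ∀ k, u (k + 1) = (1 + m * A (k + 1))⁻¹ •
    ((1 + m * A k) • u k + (m * α (k + 1)) • y (k + 1) - α (k + 1) • g (y (k + 1)))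
  x_succ : ∀ k, x (k + 1) = (A (k + 1))⁻¹ • (A k • x k + α (k + 1) • u (k + 1))

namespace IsSimilarTriangles

variable {E : Type*} [NormedAddCommGroup E] [InnerProductSpace ℝ E]
  {L m : ℝ} {g : E → E} {α A : ℕ → ℝ} {y u x : ℕ → E} {f : E → ℝ} {f' : E → E}

theorem A_smul_x_sub_y (h : IsSimilarTriangles L m g α A y u x) (k : ℕ) :
    A k • (x k - y (k + 1)) = -(α (k + 1) • (u k - y (k + 1))) := by
  have hy : (A k + α (k + 1)) • y (k + 1) = A k • x k + α (k + 1) • u k := by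
    rw [← h.A_succ, h.y_succ, smul_inv_smul₀ (h.A_pos _).ne']
  linear_combination (norm := module) -hy

theorem A_mul_inner_x_sub_y (h : IsSimilarTriangles L m g α A y u x) (v : E) (k : ℕ) :
    A k * ⟪v, x k - y (k + 1)⟫ = -(α (k + 1) * ⟪v, u k - y (k + 1)⟫) := by
  simp only [← real_inner_smul_right, h.A_smul_x_sub_y, inner_neg_right]

theorem A_succ_smul_x_sub_y (h : IsSimilarTriangles L m g α A y u x) (k : ℕ) :
    A (k + 1) • (x (k + 1) - y (k + 1)) = α (k + 1) • (u (k + 1) - u k) := by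
  rw [h.x_succ, h.y_succ, smul_sub, smul_inv_smul₀ (h.A_pos _).ne',
    smul_inv_smul₀ (h.A_pos _).ne']
  module

theorem step_smul_oracle (h : IsSimilarTriangles L m g α A y u x) (k : ℕ) :
    α (k + 1) • g (y (k + 1)) =
      -((1 + m * A k) • (u (k + 1) - u k)) - (m * α (k + 1)) • (u (k + 1) - y (k + 1)) := by
  have hB : 1 + m * A (k + 1) ≠ 0 :=
    (add_pos_of_pos_of_nonneg one_pos (mul_nonneg h.m_nonneg (h.A_pos _).le)).ne'
  have hu : (1 + m * (A k + α (k + 1))) • u (k + 1) = (1 + m * A k) • u k +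
      (m * α (k + 1)) • y (k + 1) - α (k + 1) • g (y (k + 1)) := by
    rw [← h.A_succ, h.u_succ, smul_inv_smul₀ hB]
  linear_combination (norm := module) hu

theorem step_mul_inner_oracle (h : IsSimilarTriangles L m g α A y u x) (z : E) (k : ℕ) :
    α (k + 1) * ⟪g (y (k + 1)), u (k + 1) - z⟫ =
      (1 + m * A k) / 2 * (‖u k - z‖ ^ 2 - ‖u (k + 1) - u k‖ ^ 2 - ‖u (k + 1) - z‖ ^ 2) +
      m * α (k + 1) / 2 *
        (‖y (k + 1) - z‖ ^ 2 - ‖u (k + 1) - y (k + 1)‖ ^ 2 - ‖u (k + 1) - z‖ ^ 2) := by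
  rw [← real_inner_smul_left, h.step_smul_oracle, inner_sub_left, inner_neg_left,
    real_inner_smul_left, real_inner_smul_left, real_inner_sub_sub_eq_norm_sq,
    real_inner_sub_sub_eq_norm_sq]
  ring

theorem A_succ_mul_sub_y_le (h : IsSimilarTriangles L m g α A y u x)
    (hconv : ∀ v w, f v + ⟪f' v, w - v⟫ ≤ f w) (z : E) (k : ℕ) :
    A (k + 1) * (f (y (k + 1)) - f z) ≤
      A k * (f (x k) - f z) + α (k + 1) * (f (u k) - f z) := by
  have hinner := h.A_mul_inner_x_sub_y (f' (y (k + 1))) k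
  have hx := mul_le_mul_of_nonneg_left (hconv (y (k + 1)) (x k)) (h.A_pos k).le
  have hu := mul_le_mul_of_nonneg_left (hconv (y (k + 1)) (u k)) (h.step_pos k).le
  rw [h.A_succ]
  linarith

theorem A_succ_mul_norm_sq_x_sub_y (h : IsSimilarTriangles L m g α A y u x) (k : ℕ) :
    A (k + 1) * (L / 2 * ‖x (k + 1) - y (k + 1)‖ ^ 2) =
      (1 + m * A k) / 2 * ‖u (k + 1) - u k‖ ^ 2 := by
  have hnorm : A (k + 1) * ‖x (k + 1) - y (k + 1)‖ = α (k + 1) * ‖u (k + 1) - u k‖ := by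
    simpa only [norm_smul, Real.norm_of_nonneg (h.A_pos _).le,
      Real.norm_of_nonneg (h.step_pos k).le] using congrArg norm (h.A_succ_smul_x_sub_y k)
  refine mul_left_cancel₀ (h.A_pos (k + 1)).ne' ?_
  calc A (k + 1) * (A (k + 1) * (L / 2 * ‖x (k + 1) - y (k + 1)‖ ^ 2))
      = L / 2 * (A (k + 1) * ‖x (k + 1) - y (k + 1)‖) ^ 2 := by ring
    _ = L * α (k + 1) ^ 2 / 2 * ‖u (k + 1) - u k‖ ^ 2 := by rw [hnorm]; ring
    _ = A (k + 1) * ((1 + m * A k) / 2 * ‖u (k + 1) - u k‖ ^ 2) := by rw [← h.step_eq]; ring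

theorem A_succ_mul_sub_x_le (h : IsSimilarTriangles L m g α A y u x)
    (hquad : ∀ v w, f w ≤ f v + ⟪f' v, w - v⟫ + L / 2 * ‖w - v‖ ^ 2)
    (hsc : ∀ v w, f v + ⟪f' v, w - v⟫ + m * ‖v - w‖ ^ 2 ≤ f w) (z : E) (k : ℕ) :
    A (k + 1) * (f (x (k + 1)) - f z) ≤ A k * (f (x k) - f z) +
      α (k + 1) * ⟪f' (y (k + 1)), u (k + 1) - z⟫ - α (k + 1) * m * ‖y (k + 1) - z‖ ^ 2 +
      (1 + m * A k) / 2 * ‖u (k + 1) - u k‖ ^ 2 := by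
  set p := y (k + 1)
  have hx : A k * ⟪f' p, x k - p⟫ = -(α (k + 1) * ⟪f' p, u k - p⟫) :=
    h.A_mul_inner_x_sub_y (f' p) k
  have hx' : A (k + 1) * ⟪f' p, x (k + 1) - p⟫ = α (k + 1) * ⟪f' p, u (k + 1) - u k⟫ := by
    simp only [← real_inner_smul_right, p, h.A_succ_smul_x_sub_y]
  have hsplit : ⟪f' p, u (k + 1) - z⟫ =
      ⟪f' p, u (k + 1) - u k⟫ + ⟪f' p, u k - p⟫ - ⟪f' p, z - p⟫ := by
    rw [← inner_add_right, ← inner_sub_right]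
    congr 1
    abel
  have hdesc := mul_le_mul_of_nonneg_left (hquad p (x (k + 1))) (h.A_pos (k + 1)).le
  have hconv : A k * (f p + ⟪f' p, x k - p⟫) ≤ A k * f (x k) :=
    mul_le_mul_of_nonneg_left (add_inner_le_of_strongConvex h.m_nonneg hsc p (x k)) (h.A_pos k).le
  have hstrong := mul_le_mul_of_nonneg_left (hsc p z) (h.step_pos k).le
  have hquadratic : A (k + 1) * (L / 2 * ‖x (k + 1) - p‖ ^ 2) =
      (1 + m * A k) / 2 * ‖u (k + 1) - u k‖ ^ 2 := h.A_succ_mul_norm_sq_x_sub_y k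
  simp only [mul_add, hx', hquadratic] at hdesc
  rw [hsplit]
  rw [h.A_succ] at hdesc ⊢
  linarith

/-- The Lyapunov function of the similar triangles method at the iterates `x` and `u`, relative to
the reference point `z` and the step size sum `A`. -/
noncomputable def potential (f : E → ℝ) (m : ℝ) (z : E) (A : ℝ) (x u : E) : ℝ :=
  A * (f x - f z) + (1 + m * A) / 2 * ‖u - z‖ ^ 2

theorem potential_succ_le (h : IsSimilarTriangles L m g α A y u x)
    (hquad : ∀ v w, f w ≤ f v + ⟪f' v, w - v⟫ + L / 2 * ‖w - v‖ ^ 2)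
    (hsc : ∀ v w, f v + ⟪f' v, w - v⟫ + m * ‖v - w‖ ^ 2 ≤ f w) {z : E}
    (herr : ∀ v, ‖g v - f' v‖ ≤ 2 / 5 * m * ‖v - z‖) (k : ℕ) :
    potential f m z (A (k + 1)) (x (k + 1)) (u (k + 1)) ≤ potential f m z (A k) (x k) (u k) := by
  have hprimal := h.A_succ_mul_sub_x_le hquad hsc z k
  have hdual := h.step_mul_inner_oracle z k
  have hnoise := mul_le_mul_of_nonneg_left
    (neg_inner_le_of_norm_le (u := u (k + 1)) h.m_nonneg (herr (y (k + 1)))) (h.step_pos k).le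
  rw [inner_sub_left] at hnoise
  unfold potential
  rw [h.A_succ] at hprimal ⊢
  linarith

theorem potential_le_potential_zero (h : IsSimilarTriangles L m g α A y u x)
    (hquad : ∀ v w, f w ≤ f v + ⟪f' v, w - v⟫ + L / 2 * ‖w - v‖ ^ 2)
    (hsc : ∀ v w, f v + ⟪f' v, w - v⟫ + m * ‖v - w‖ ^ 2 ≤ f w) {z : E}
    (herr : ∀ v, ‖g v - f' v‖ ≤ 2 / 5 * m * ‖v - z‖) (k : ℕ) :
    potential f m z (A k) (x k) (u k) ≤ potential f m z (A 0) (x 0) (u 0) :=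
  antitone_nat_of_succ_le (f := fun k => potential f m z (A k) (x k) (u k))
    (h.potential_succ_le hquad hsc herr) k.zero_le

theorem potential_zero_le (h : IsSimilarTriangles L m g α A y u x) (hmL : 2 * m ≤ L) {z : E}
    (hgap : ∀ v, f v - f z ≤ L / 2 * ‖v - z‖ ^ 2) :
    potential f m z (A 0) (x 0) (u 0) ≤ 5 / 4 * ‖u 0 - z‖ ^ 2 := by
  have hL := h.L_pos
  have hmL' : m * (1 / L) ≤ 1 / 2 := by
    rw [mul_one_div, div_le_iff₀ hL]
    linarith
  calc potential f m z (A 0) (x 0) (u 0)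
      = 1 / L * (f (u 0) - f z) + (1 + m * (1 / L)) / 2 * ‖u 0 - z‖ ^ 2 := by
        rw [potential, h.x_zero, h.A_zero]
    _ ≤ 1 / L * (L / 2 * ‖u 0 - z‖ ^ 2) + (1 + 1 / 2) / 2 * ‖u 0 - z‖ ^ 2 := by
        gcongr
        exact hgap _
    _ = 5 / 4 * ‖u 0 - z‖ ^ 2 := by field_simp; ring

theorem step_mul_sub_le_potential (h : IsSimilarTriangles L m g α A y u x)
    (hconv : ∀ v w, f v + ⟪f' v, w - v⟫ ≤ f w) {z : E} (hz : ∀ v, f z ≤ f v)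
    (hgap : ∀ v, f v - f z ≤ L / 2 * ‖v - z‖ ^ 2) (k : ℕ) :
    α (k + 1) * (f (y (k + 1)) - f z) ≤ potential f m z (A k) (x k) (u k) := by
  have hα := h.step_pos k
  have hle : α (k + 1) ≤ A (k + 1) := by rw [h.A_succ]; linarith [h.A_pos k]
  have hx : 0 ≤ A k * (f (x k) - f z) := mul_nonneg (h.A_pos k).le (sub_nonneg.2 (hz _))
  refine le_of_mul_le_mul_left ?_ (h.A_pos (k + 1))
  calc A (k + 1) * (α (k + 1) * (f (y (k + 1)) - f z))
      = α (k + 1) * (A (k + 1) * (f (y (k + 1)) - f z)) := by ring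
    _ ≤ α (k + 1) * (A k * (f (x k) - f z) + α (k + 1) * (L / 2 * ‖u k - z‖ ^ 2)) := by
        gcongr
        refine (h.A_succ_mul_sub_y_le hconv z k).trans ?_
        gcongr
        exact hgap _
    _ = α (k + 1) * (A k * (f (x k) - f z)) +
          A (k + 1) * ((1 + m * A k) / 2 * ‖u k - z‖ ^ 2) := by
        linear_combination -‖u k - z‖ ^ 2 / 2 * h.step_eq k
    _ ≤ A (k + 1) * (A k * (f (x k) - f z)) +
          A (k + 1) * ((1 + m * A k) / 2 * ‖u k - z‖ ^ 2) := by gcongr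
    _ = A (k + 1) * potential f m z (A k) (x k) (u k) := by rw [potential]; ring

end IsSimilarTriangles

theorem stmt_16_general {E : Type*} [NormedAddCommGroup E] [InnerProductSpace ℝ E]
    [CompleteSpace E] {f : E → ℝ} {f' g : E → E} {L m a : ℝ} {α A : ℕ → ℝ} {y u x : ℕ → E} {z : E}
    (hstm : IsSimilarTriangles L m g α A y u x)
    (hgrad : ∀ v, HasGradientAt f (f' v) v)
    (hsmooth : ∀ v w, ‖f' v - f' w‖ ≤ L * ‖v - w‖)
    (hsc : ∀ v w, f v + ⟪f' v, w - v⟫ + m * ‖v - w‖ ^ 2 ≤ f w)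
    (ha : a ≤ 2 / 5 * (m / L)) (hrel : ∀ v, ‖g v - f' v‖ ≤ a * ‖f' v‖)
    (hz : ∀ v, f z ≤ f v) {k : ℕ} (hk : 1 ≤ k) :
    f (y k) - f z ≤
      5 * L * ‖u 0 - z‖ ^ 2 / 4 * Real.exp (-((k : ℝ) / 4) * √(m / L)) := by
  obtain ⟨j, rfl⟩ := Nat.exists_eq_add_of_le' hk
  have hL := hstm.L_pos
  rcases eq_or_ne (y (j + 1)) z with heq | hne
  · rw [heq, sub_self]
    positivity
  have hmL : 2 * m ≤ L := two_mul_le_of_strongConvex_of_lipschitz hsc hsmooth hne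
  have hz0 : f' z = 0 := gradient_eq_zero_of_forall_le (hgrad z) hz
  have hgap := sub_le_norm_sq_of_lipschitz_gradient hgrad hsmooth hz0
  have hconv := add_inner_le_of_strongConvex hstm.m_nonneg hsc
  have hpotential : α (j + 1) * (f (y (j + 1)) - f z) ≤ 5 / 4 * ‖u 0 - z‖ ^ 2 :=
    (hstm.step_mul_sub_le_potential hconv hz hgap j).trans <|
      (hstm.potential_le_potential_zero (le_quadratic_of_lipschitz_gradient hgrad hsmooth) hsc
        (norm_sub_le_of_relative_error hL hstm.m_nonneg hsmooth ha hrel hz0) j).trans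
      (hstm.potential_zero_le hmL hgap)
  have hexp := hstm.exp_le_step (by linarith [hstm.m_nonneg]) j
  rw [neg_mul, Real.exp_neg, ← div_eq_mul_inv, le_div_iff₀ (Real.exp_pos _)]
  calc (f (y (j + 1)) - f z) * Real.exp ((j + 1 : ℕ) / 4 * √(m / L))
      ≤ (f (y (j + 1)) - f z) * (L * α (j + 1)) := by
        gcongr
        exact sub_nonneg.2 (hz _)
    _ = L * (α (j + 1) * (f (y (j + 1)) - f z)) := by ring
    _ ≤ L * (5 / 4 * ‖u 0 - z‖ ^ 2) := by gcongr
    _ = 5 * L * ‖u 0 - z‖ ^ 2 / 4 := by ring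

/-- Theorem 5.1: linear convergence of STM2 under relative noise
`‖g̃(x) − ∇f(x)‖ ≤ a ‖∇f(x)‖` with `a ≤ (1/7)(μ₂/L)`, `L = 2 L_f`, `μ₂ = μ/2`. -/
theorem stmt_16 {n : ℕ}
    (f : EuclideanSpace ℝ (Fin n) → ℝ)
    (f' gt : EuclideanSpace ℝ (Fin n) → EuclideanSpace ℝ (Fin n))
    (Lf μ a R : ℝ) (hLf : 0 < Lf) (hμ : 0 < μ)
    (ha0 : 0 ≤ a) (ha1 : a ≤ 1)
    (haB : a ≤ 1 / 7 * (μ / 2 / (2 * Lf)))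
    (hgrad : ∀ v, HasGradientAt f (f' v) v)
    (hsmooth : ∀ v w, ‖f' v - f' w‖ ≤ Lf * ‖v - w‖)
    (hsc : ∀ v w, f v + ⟪f' v, w - v⟫ + μ / 2 * ‖v - w‖ ^ 2 ≤ f w)
    (hrel : ∀ v, ‖gt v - f' v‖ ≤ a * ‖f' v‖)
    (xstar : EuclideanSpace ℝ (Fin n)) (hxstar : ∀ v, f xstar ≤ f v)
    (xstart : EuclideanSpace ℝ (Fin n)) (hR : ‖xstart - xstar‖ ≤ R)
    (α A : ℕ → ℝ) (y u x : ℕ → EuclideanSpace ℝ (Fin n))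
    (hy0 : y 0 = xstart) (hu0 : u 0 = xstart) (hx0 : x 0 = xstart)
    (hα0 : α 0 = 1 / (2 * Lf)) (hA0 : A 0 = 1 / (2 * Lf))
    (hαpos : ∀ k, 0 < α (k + 1))
    (hαeq : ∀ k, (1 + μ / 2 * A k) * (A k + α (k + 1)) = 2 * Lf * α (k + 1) ^ 2)
    (hA : ∀ k, A (k + 1) = A k + α (k + 1))
    (hy : ∀ k, y (k + 1) = (A (k + 1))⁻¹ • (A k • x k + α (k + 1) • u k))
    (hu : ∀ k, u (k + 1) = (1 + μ / 2 * A (k + 1))⁻¹ •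
      ((1 + μ / 2 * A k) • u k + (μ / 2 * α (k + 1)) • y (k + 1) -
        α (k + 1) • gt (y (k + 1))))
    (hx : ∀ k, x (k + 1) = (A (k + 1))⁻¹ • (A k • x k + α (k + 1) • u (k + 1))) :
    ∀ k : ℕ, 1 ≤ k → f (y k) - f xstar ≤
      (5 * (2 * Lf) * R ^ 2 / 4 +
        15 / 196 * Real.sqrt (2 * (2 * Lf) / μ) * (f (y 0) - f xstar)) *
      Real.exp (-((k : ℝ) / 4) * Real.sqrt (μ / (2 * (2 * Lf)))) := by
  intro k hk
  have hstm : IsSimilarTriangles (2 * Lf) (μ / 2) gt α A y u x :=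
    ⟨⟨by positivity, by positivity, hA0, hA, hαpos, fun k => hA k ▸ hαeq k⟩, hx0.trans hu0.symm,
      hy, hu, hx⟩
  have hinit : 0 ≤ f (y 0) - f xstar := sub_nonneg.2 (hxstar _)
  have hbound := stmt_16_general hstm hgrad (fun v w => (hsmooth v w).trans (by gcongr; linarith))
    hsc (haB.trans (by gcongr <;> norm_num)) hrel hxstar hk
  rw [hu0, div_div] at hbound
  refine hbound.trans ?_
  gcongr
  exact le_add_of_le_of_nonneg (by gcongr) (by positivity)
end
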